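/- (Main theorem: the simplicial complex Δ_{C_n,2} is pure of dimension 2(n−1) and a weak pseudomanifold.) Let n ≥ 1 and let T be an n-periodic 2-triangulation on ℤ. Then: (1) T contains exactly 2(n−1) orbits of 2-relevant edges under translation by n; and (2) for every 2-relevant edge e ∈ T with translation orbit ẽ = {e + tn : t ∈ ℤ}, there are exactly two n-periodic 2-triangulations on ℤ containing T ∖ ẽ (one of which is T itself). -/

import Mathlib

/- Edges on the universal cover of the half-cylinder, modeled by the integers.
   An edge is an unordered pair of distinct integers, represented as an ordered
   pair `(a, b)` with `a < b` (validity). -/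

namespace Multitriangulation

abbrev Edge := ℤ × ℤ

/-- Translate an edge by `t`: `[a,b] + t = [a+t, b+t]`. -/
def shift (e : Edge) (t : ℤ) : Edge := (e.1 + t, e.2 + t)

/-- Two edges (as unordered pairs of integers) cross:
their endpoints strictly interleave. -/
def Crosses (e f : Edge) : Prop :=
  (min e.1 e.2 < min f.1 f.2 ∧ min f.1 f.2 < max e.1 e.2 ∧ max e.1 e.2 < max f.1 f.2) ∨
  (min f.1 f.2 < min e.1 e.2 ∧ min e.1 e.2 < max f.1 f.2 ∧ max f.1 f.2 < max e.1 e.2)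

/-- A finite set of edges is an `l`-crossing if it consists of `l` pairwise
crossing edges. -/
def IsCrossing (l : ℕ) (S : Finset Edge) : Prop :=
  S.card = l ∧ ∀ e ∈ S, ∀ f ∈ S, e ≠ f → Crosses e f

/-- A set of edges is `l`-crossing-free if no `l` of its edges pairwise cross. -/
def CrossingFree (l : ℕ) (E : Set Edge) : Prop :=
  ¬ ∃ S : Finset Edge, ↑S ⊆ E ∧ IsCrossing l S

/-- A set of edges is `n`-periodic if `e ∈ E ↔ e + n ∈ E`. -/
def Periodic (n : ℕ) (E : Set Edge) : Prop := ∀ e, e ∈ E ↔ shift e (n : ℤ) ∈ E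

/-- All members are genuine edges `[a,b]` with `a < b`. -/
def ValidEdges (E : Set Edge) : Prop := ∀ e ∈ E, e.1 < e.2

/-- An `n`-periodic `k`-triangulation on `ℤ`: an `n`-periodic
`(k+1)`-crossing-free set of edges that is maximal under inclusion among
`n`-periodic `(k+1)`-crossing-free sets of edges. -/
def IsTriangulation (n k : ℕ) (T : Set Edge) : Prop :=
  ValidEdges T ∧ Periodic n T ∧ CrossingFree (k+1) T ∧
  ∀ T', ValidEdges T' → Periodic n T' → CrossingFree (k+1) T' → T ⊆ T' → T' = T

/-- The orbit of an edge under translation by multiples of `n`. -/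
def orbitOf (n : ℕ) (e : Edge) : Set Edge := {f | ∃ t : ℤ, f = shift e (t * n)}


/-- Abstract `n`-periodic, 3-crossing-free edge relation. -/
structure PF (n : ℤ) (E : ℤ → ℤ → Prop) : Prop where
  lt : ∀ {x y}, E x y → x < y
  up : ∀ {x y}, E x y → E (x + n) (y + n)
  dn : ∀ {x y}, E x y → E (x - n) (y - n)
  F : ∀ {x1 y1 x2 y2 x3 y3}, E x1 y1 → E x2 y2 → E x3 y3 →
    (x1 < x2 ∧ x2 < x3 ∧ x3 < y1 ∧ y1 < y2 ∧ y2 < y3) → False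
  npos : 2 ≤ n

def Blk1 (E : ℤ → ℤ → Prop) (x y : ℤ) : Prop :=
  ∃ p q r s, E p q ∧ E r s ∧ r < q ∧ p < r ∧ q < s ∧
    ((x < p ∧ r < y ∧ y < q) ∨ (p < x ∧ x < r ∧ q < y ∧ y < s) ∨ (r < x ∧ x < q ∧ s < y))

def BlkB (n : ℤ) (E : ℤ → ℤ → Prop) (x y : ℤ) : Prop :=
  ∃ p q, E p q ∧ x < p ∧ p < x + n ∧ x + n < y ∧ y < q ∧ q < y + n ∧ q ≤ p + n

/-- Abstract `n`-periodic 2-triangulation. -/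
structure Tri (n : ℤ) (E : ℤ → ℤ → Prop) : Prop extends PF n E where
  s1 : ∀ x, E x (x + 1)
  s2 : ∀ x, E x (x + 2)
  blk : ∀ {x y}, x < y → y ≤ x + 2 * n → ¬ E x y → Blk1 E x y ∨ BlkB n E x y
  blk2 : ∀ {x}, ¬ E x (x + 2 * n) → Blk1 E x (x + 2 * n)

theorem PF.len {n : ℤ} {E : ℤ → ℤ → Prop} (H : PF n E) {x y : ℤ} (h : E x y) : y ≤ x + 2 * n := by
  by_contra hh
  have := H.npos
  exact H.F h (H.up h) (H.up (H.up h)) (by omega)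

theorem least_above {P : ℤ → Prop} {a b : ℤ} (hab : a < b) (hb : P b) :
    ∃ m, a < m ∧ m ≤ b ∧ P m ∧ ∀ z, a < z → z < m → ¬ P z := by
  obtain ⟨m, ⟨hm1, hm2⟩, hm⟩ := Int.exists_least_of_bdd (P := fun z => a < z ∧ P z)
    ⟨a, fun z hz => hz.1.le⟩ ⟨b, hab, hb⟩
  refine ⟨m, hm1, hm b ⟨hab, hb⟩, hm2, fun z h1 h2 h3 => ?_⟩
  have := hm z ⟨h1, h3⟩
  omega

theorem greatest_below {P : ℤ → Prop} {a b : ℤ} (hab : a < b) (ha : P a) :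
    ∃ m, a ≤ m ∧ m < b ∧ P m ∧ ∀ z, m < z → z < b → ¬ P z := by
  obtain ⟨m, ⟨hm1, hm2⟩, hm⟩ := Int.exists_greatest_of_bdd (P := fun z => z < b ∧ P z)
    ⟨b, fun z hz => hz.1.le⟩ ⟨a, hab, ha⟩
  refine ⟨m, hm a ⟨hab, ha⟩, hm1, hm2, fun z h1 h2 h3 => ?_⟩
  have := hm z ⟨h2, h3⟩
  omega

/-- Lemma A0 -/
theorem Tri.A0 {n : ℤ} {E : ℤ → ℤ → Prop} (H : Tri n E) {a0 b0 a1 b1 : ℤ}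
    (hl : a0 + 2 ≤ b0) (h1 : E a0 b1) (hb : b0 < b1)
    (hc : ∀ z, b0 < z → z < b1 → ¬ E a0 z) (h2 : E a1 b1) (ha : a0 < a1) (hl1 : a1 + 2 ≤ b1)
    (hr : ∀ z, a0 < z → z < a1 → ¬ E z b1) : a1 < b0 := by
  by_contra hcon
  have hn := H.npos
  have hlen := H.len h1
  set Q : ℤ → Prop := fun y => y < b1 ∧ ((∃ o, o < a0 ∧ E o y) ∨ (∃ o, b1 < o ∧ E y o)) with hQ
  have hr' : ∀ z, a0 < z → E z b1 → a1 ≤ z := fun z h3 h4 => by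
    by_contra h5
    exact hr z h3 (by omega) h4
  have hne : ∃ y, a1 < y ∧ Q y := by
    rcases H.blk (x := a0) (y := b1 - 1) (by omega) (by omega) (hc _ (by omega) (by omega)) with
      ⟨p, q, r, s, e1, e2, h3, h4, h5, (h6 | h6 | h6)⟩ | ⟨p, q, e1, h3, h4, h5, h6, h7, h8⟩
    · by_cases h : b1 < q
      · exact (H.F h1 e1 e2 (by omega)).elim
      · obtain rfl : q = b1 := by omega
        have := hr' p (by omega) e1
        exact ⟨r, by omega, by omega, Or.inr ⟨s, by omega, e2⟩⟩
    · by_cases h : b1 < s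
      · exact (H.F e1 h1 e2 (by omega)).elim
      · obtain rfl : s = b1 := by omega
        have := hr' r (by omega) e2
        exact ⟨q, by omega, by omega, Or.inl ⟨p, by omega, e1⟩⟩
    · exact (H.F e1 e2 h1 (by omega)).elim
    · by_cases h : b1 < q
      · exact (H.F h1 e1 (H.up h1) (by omega)).elim
      · obtain rfl : q = b1 := by omega
        have := hr' p (by omega) e1
        exact ⟨a0 + n, by omega, by omega, Or.inr ⟨_, by omega, H.up h1⟩⟩
  obtain ⟨y0, hy0, hy0'⟩ := hne
  obtain ⟨y, hy1, -, ⟨hy2, hf⟩, hmin⟩ := least_above hy0 hy0'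
  have hf' : ∀ p q, E p q → a0 < p → p < a1 → y < q → q < b1 → False := by
    intro p q e h3 h4 h5 h6
    rcases hf with ⟨o, ho, eo⟩ | ⟨o, ho, eo⟩
    · exact H.F eo e h2 (by omega)
    · exact H.F e h2 eo (by omega)
  have hff : ∀ p q r s, E p q → E r s → a0 < p → p < r → r < y → y < q → q < s → s ≤ b1 →
      False := by
    intro p q r s e1 e2 h3 h4 h5 h6 h7 h8
    rcases hf with ⟨o, ho, eo⟩ | ⟨o, ho, eo⟩
    · exact H.F eo e1 e2 (by omega)
    · exact H.F e1 e2 eo (by omega)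
  rcases H.blk (x := a0) (y := y) (by omega) (by omega) (hc _ (by omega) (by omega)) with
      ⟨p, q, r, s, e1, e2, h3, h4, h5, (h6 | h6 | h6)⟩ | ⟨p, q, e1, h3, h4, h5, h6, h7, h8⟩
  · by_cases h : b1 < q
    · exact (H.F h1 e1 e2 (by omega)).elim
    · by_cases h' : s ≤ b1
      · exact hff p q r s e1 e2 (by omega) (by omega) (by omega) (by omega) (by omega) (by omega)
      · have : r ≤ a1 := by
          by_contra hh
          exact hmin r (by omega) (by omega) ⟨by omega, Or.inr ⟨s, by omega, e2⟩⟩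
        by_cases hq : q = b1
        · subst hq
          have := hr' p (by omega) e1
          omega
        · exact hf' p q e1 (by omega) (by omega) (by omega) (by omega)
  · by_cases h : b1 < s
    · exact (H.F e1 h1 e2 (by omega)).elim
    · have : q ≤ a1 := by
        by_contra hh
        exact hmin q (by omega) (by omega) ⟨by omega, Or.inl ⟨p, by omega, e1⟩⟩
      by_cases hq : s = b1
      · subst hq
        have := hr' r (by omega) e2
        omega
      · exact hf' r s e2 (by omega) (by omega) (by omega) (by omega)
  · exact (H.F e1 e2 h1 (by omega)).elim
  · by_cases h : b1 < q
    · exact (H.F h1 e1 (H.up h1) (by omega)).elim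
    · have : a1 ≤ p := by
        by_contra hh
        by_cases hq : q = b1
        · subst hq
          exact hh (hr' p (by omega) e1)
        · exact hf' p q e1 (by omega) (by omega) (by omega) (by omega)
      exact hmin (a0 + n) (by omega) (by omega) ⟨by omega, Or.inr ⟨_, by omega, H.up h1⟩⟩

/-- Lemma A -/
theorem Tri.A {n : ℤ} {E : ℤ → ℤ → Prop} (H : Tri n E) {a0 b0 a1 b1 b2 : ℤ}
    (ho : a0 < a1 ∧ a1 < b0 ∧ b0 < b1 ∧ b1 < b2)
    (e00 : E a0 b0) (e01 : E a0 b1) (e11 : E a1 b1) (e12 : E a1 b2)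
    (hc0 : ∀ z, b0 < z → z < b1 → ¬ E a0 z)
    (hc1 : ∀ z, b1 < z → z < b2 → ¬ E a1 z) : E b0 b2 := by
  by_contra hg
  have hn := H.npos
  have hl := H.len e12
  rcases H.blk (x := b0) (y := b2) (by omega) (by omega) hg with
      ⟨p, q, r, s, e1, e2, h3, h4, h5, (h6 | h6 | h6)⟩ | ⟨p, q, e1, h3, h4, h5, h6, h7, h8⟩
  · exact H.F e12 e1 e2 (by omega)
  · by_cases h : p < a1
    · exact H.F e1 e12 e2 (by omega)
    · by_cases hr : r < b1
      · exact H.F e01 e12 e2 (by omega)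
      · by_cases hp : p = a1
        · subst hp
          exact hc1 q (by omega) (by omega) e1
        · exact H.F e00 e11 e1 (by omega)
  · by_cases h : r < a1
    · exact H.F e1 e2 e12 (by omega)
    · by_cases hp : a0 < p
      · exact H.F e00 e1 e2 (by omega)
      · by_cases hq : q < b1
        · by_cases hp' : p = a0
          · subst hp'
            exact hc0 q (by omega) (by omega) e1
          · exact H.F e1 e01 e12 (by omega)
        · by_cases hr : r = a1
          · subst hr
            exact hc1 s (by omega) (by omega) e2
          · exact H.F e00 e11 e2 (by omega)
  · by_cases h : p < b1
    · exact H.F e01 e12 e1 (by omega)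
    by_cases h' : p < a1 + n
    · exact H.F e12 e1 (H.up e12) (by omega)
    by_cases hq : b1 < q - n
    · by_cases hp : p - n = a1
      · have := H.dn e1
        rw [hp] at this
        exact hc1 _ (by omega) (by omega) this
      · exact H.F e00 e11 (H.dn e1) (by omega)
    rcases lt_trichotomy a0 (a1 - n) with h9 | h9 | h9
    · exact H.F e00 (H.dn e12) e11 (by omega)
    · have := H.up e00
      rw [h9, sub_add_cancel] at this
      exact hc1 _ (by omega) (by omega) this
    · exact H.F (H.dn e12) e01 e12 (by omega)

/-- Existence of a loop. -/
theorem Tri.loop {n : ℤ} {E : ℤ → ℤ → Prop} (H : Tri n E) : ∃ c, E c (c + 2 * n) := by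
  have hn := H.npos
  obtain ⟨m, hm1, hm2, ⟨a, ha⟩, hm⟩ := greatest_below (P := fun m => ∃ a, E a (a + m))
    (a := 2) (b := 2 * n + 1) (by omega) ⟨0, H.s2 0⟩
  have hmax : ∀ x y, E x y → y ≤ x + m := by
    intro x y h
    by_contra hh
    have := H.len h
    exact hm (y - x) (by omega) (by omega) ⟨x, by convert h using 1; ring⟩
  rcases eq_or_lt_of_le (show m ≤ 2 * n by omega) with rfl | hmn
  · exact ⟨a, ha⟩
  exfalso
  rcases lt_or_ge n m with hnm | hnm
  · obtain ⟨p, q, r, s, e1, e2, h3, h4, h5, (h6 | h6 | h6)⟩ := H.blk2 (x := a) (fun h => by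
      have := hmax _ _ h
      omega)
    · have m1 := hmax _ _ e1
      have m2 := hmax _ _ e2
      by_cases h7 : p < a + n
      · exact H.F ha e1 (H.up ha) (by omega)
      by_cases h8 : r < a + m
      · exact H.F ha e1 e2 (by omega)
      by_cases h9 : a + n + m < s
      · exact H.F (H.up ha) e2 (H.up (H.up ha)) (by omega)
      · exact H.F (H.dn e1) (H.dn e2) (H.up ha) (by omega)
    · have m1 := hmax _ _ e1
      have m2 := hmax _ _ e2
      by_cases h7 : a + n < q
      · exact H.F e1 ha (H.up ha) (by omega)
      · exact H.F ha e2 (H.up ha) (by omega)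
    · have m2 := hmax _ _ e2
      exact H.F e1 e2 ha (by omega)
  · have hW : ∃ W, a + m < W ∧ (∀ f z, a < f → f < a + m → E f z → z ≤ W) ∧
        ((∃ f, a < f ∧ f < a + m ∧ E f W) ∨
          (W = a + m + 1 ∧ ∀ f z, a < f → f < a + m → E f z → z ≤ a + m)) := by
      by_cases h : ∃ f z, a < f ∧ f < a + m ∧ E f z ∧ a + m < z
      · obtain ⟨f, z, hf1, hf2, hf3, hz⟩ := h
        obtain ⟨W, hW1, hW2, ⟨g, hg1, hg2, hg3⟩, hW4⟩ := greatest_below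
          (P := fun W => ∃ f, a < f ∧ f < a + m ∧ E f W) (a := z) (b := a + m + m)
          (by have := hmax _ _ hf3; omega) ⟨f, hf1, hf2, hf3⟩
        refine ⟨W, by omega, fun f' z' h1 h2 h3 => ?_, Or.inl ⟨g, hg1, hg2, hg3⟩⟩
        by_contra h4
        have := hmax _ _ h3
        exact hW4 z' (by omega) (by omega) ⟨f', h1, h2, h3⟩
      · push Not at h
        exact ⟨a + m + 1, by omega, fun f z h1 h2 h3 => by have := h f z h1 h2 h3; omega,
          Or.inr ⟨rfl, h⟩⟩
    obtain ⟨W, hW1, hW2, hW3⟩ := hW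
    have hWn : W ≤ a + 2 * n := by
      rcases hW3 with ⟨f, h1, h2, h3⟩ | ⟨h1, -⟩
      · have := hmax _ _ h3
        omega
      · omega
    rcases H.blk (x := a) (y := W) (by omega) hWn (fun h => by have := hmax _ _ h; omega) with
      ⟨p, q, r, s, e1, e2, h3, h4, h5, (h6 | h6 | h6)⟩ | ⟨p, q, e1, h3, h4, h5, h6, h7, h8⟩
    · have h7 : a + m ≤ p := by
        by_contra h
        have := hW2 p q (by omega) (by omega) e1
        omega
      rcases hW3 with ⟨f, h1, h2, h3⟩ | ⟨h1, h2⟩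
      · exact H.F h3 e1 e2 (by omega)
      · omega
    · have h7 : a + m ≤ r := by
        by_contra h
        have := hW2 r s (by omega) (by omega) e2
        omega
      have := hmax _ _ e1
      omega
    · have := hmax _ _ e2
      exact H.F e1 e2 ha (by omega)
    · have h9 : a + m ≤ p := by
        by_contra h
        have := hW2 p q (by omega) (by omega) e1
        omega
      have := hmax _ _ e1
      rcases hW3 with ⟨f, h1, h2, h3⟩ | ⟨h1, h2⟩
      · exact H.F h3 e1 (H.up ha) (by omega)
      · omega


section PB
variable {n : ℤ} {E : ℤ → ℤ → Prop}

structure Star (E : ℤ → ℤ → Prop) (a0 a1 b0 b1 b2 : ℤ) : Prop where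
  o : a0 < a1 ∧ a1 < b0 ∧ b0 < b1 ∧ b1 < b2
  e00 : E a0 b0
  e01 : E a0 b1
  e11 : E a1 b1
  e12 : E a1 b2
  e02 : E b0 b2

section
variable {a0 a1 b0 b1 b2 : ℤ}
theorem Star.cA0 (H : PF n E) (S : Star E a0 a1 b0 b1 b2) {z : ℤ} (h1 : b0 < z) (h2 : z < b1) :
    ¬ E a0 z := fun h => H.F h S.e11 S.e02 (by have := S.o; omega)
theorem Star.cA1 (H : PF n E) (S : Star E a0 a1 b0 b1 b2) {z : ℤ} (h1 : b1 < z) (h2 : z < b2) :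
    ¬ E a1 z := fun h => H.F S.e01 h S.e02 (by have := S.o; omega)
theorem Star.rB1 (H : PF n E) (S : Star E a0 a1 b0 b1 b2) {z : ℤ} (h1 : a0 < z) (h2 : z < a1) :
    ¬ E z b1 := fun h => H.F S.e00 h S.e12 (by have := S.o; omega)
theorem Star.rB2 (H : PF n E) (S : Star E a0 a1 b0 b1 b2) {z : ℤ} (h1 : a1 < z) (h2 : z < b0) :
    ¬ E z b2 := fun h => H.F S.e00 S.e11 h (by have := S.o; omega)
theorem Star.cB0 (H : PF n E) (S : Star E a0 a1 b0 b1 b2) {z : ℤ} (h1 : b2 < z) :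
    ¬ E b0 z := fun h => H.F S.e01 S.e12 h (by have := S.o; omega)
theorem Star.rB0 (H : PF n E) (S : Star E a0 a1 b0 b1 b2) {z : ℤ} (h1 : z < a0) :
    ¬ E z b0 := fun h => H.F h S.e01 S.e12 (by have := S.o; omega)

theorem Star.add (H : PF n E) (S : Star E a0 a1 b0 b1 b2) :
    Star E (a0 + n) (a1 + n) (b0 + n) (b1 + n) (b2 + n) :=
  ⟨by have := S.o; omega, H.up S.e00, H.up S.e01, H.up S.e11, H.up S.e12, H.up S.e02⟩
theorem Star.sub (H : PF n E) (S : Star E a0 a1 b0 b1 b2) :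
    Star E (a0 - n) (a1 - n) (b0 - n) (b1 - n) (b2 - n) :=
  ⟨by have := S.o; omega, H.dn S.e00, H.dn S.e01, H.dn S.e11, H.dn S.e12, H.dn S.e02⟩
end

/-- reflected relation -/
def Rf (E : ℤ → ℤ → Prop) : ℤ → ℤ → Prop := fun x y => E (-y) (-x)

theorem Rf.intro {x y : ℤ} (h : E x y) : Rf E (-y) (-x) := by
  unfold Rf; simpa using h

theorem PF.refl (H : PF n E) : PF n (Rf E) where
  lt h := by have := H.lt h; omega
  up h := by have := H.dn h; unfold Rf; convert this using 1 <;> ring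
  dn h := by have := H.up h; unfold Rf; convert this using 1 <;> ring
  F h1 h2 h3 h := H.F h3 h2 h1 (by omega)
  npos := H.npos

theorem Blk1.refl {x y : ℤ} (h : Blk1 E (-y) (-x)) : Blk1 (Rf E) x y := by
  obtain ⟨p, q, r, s, e1, e2, h3, h4, h5, h6⟩ := h
  exact ⟨-s, -r, -q, -p, Rf.intro e2, Rf.intro e1, by omega, by omega, by omega, by omega⟩

theorem Tri.refl (H : Tri n E) : Tri n (Rf E) where
  toPF := H.toPF.refl
  s1 x := by have := H.s1 (-(x+1)); unfold Rf; convert this using 1; ring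
  s2 x := by have := H.s2 (-(x+2)); unfold Rf; convert this using 1; ring
  blk {x y} h1 h2 h3 := by
    rcases H.blk (x := -y) (y := -x) (by omega) (by omega) h3 with h | ⟨p, q, e, h⟩
    · exact Or.inl h.refl
    · exact Or.inr ⟨-(q - n), -(p - n), Rf.intro (H.dn e), by omega⟩
  blk2 {x} h := by
    have := H.blk2 (x := -(x + 2 * n)) (by unfold Rf at h; convert h using 2; ring)
    apply Blk1.refl
    convert this using 1; ring

theorem Star.refl {a0 a1 b0 b1 b2 : ℤ} (S : Star E a0 a1 b0 b1 b2) :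
    Star (Rf E) (-b2) (-b1) (-b0) (-a1) (-a0) :=
  ⟨by have := S.o; omega, Rf.intro S.e02, Rf.intro S.e12, Rf.intro S.e11, Rf.intro S.e01,
    Rf.intro S.e00⟩

theorem Rf_Rf : Rf (Rf E) = E := by
  funext x y; simp [Rf]

theorem Star.unrefl {a0 a1 b0 b1 b2 : ℤ} (S : Star (Rf E) a0 a1 b0 b1 b2) :
    Star E (-b2) (-b1) (-b0) (-a1) (-a0) := by
  have := S.refl
  rwa [Rf_Rf] at this

/-- chain step -/
def St (E : ℤ → ℤ → Prop) (x y x' y' : ℤ) : Prop :=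
  y < y' ∧ x < x' ∧ E x y' ∧ (∀ z, y < z → z < y' → ¬ E x z) ∧ E x' y' ∧
    (∀ z, x < z → z < x' → ¬ E z y')

def Ch1 (E : ℤ → ℤ → Prop) (b x y : ℤ) : Prop := y = b ∧ E x b ∧ ∀ z, z < x → ¬ E z b
def Ch2 (E : ℤ → ℤ → Prop) (b x y : ℤ) : Prop := ∃ x0 y0, Ch1 E b x0 y0 ∧ St E x0 y0 x y
def Ch3 (E : ℤ → ℤ → Prop) (b x y : ℤ) : Prop := ∃ x0 y0, Ch2 E b x0 y0 ∧ St E x0 y0 x y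

theorem St.det {x y x' y' x'' y'' : ℤ} (h : St E x y x' y') (h' : St E x y x'' y'') :
    x' = x'' ∧ y' = y'' := by
  obtain ⟨h1, h2, h3, h4, h5, h6⟩ := h
  obtain ⟨k1, k2, k3, k4, k5, k6⟩ := h'
  have : y' = y'' := by
    rcases lt_trichotomy y' y'' with h | h | h
    · exact (k4 _ h1 h h3).elim
    · exact h
    · exact (h4 _ k1 h k3).elim
  subst this
  refine ⟨?_, rfl⟩
  rcases lt_trichotomy x' x'' with h | h | h
  · exact (k6 _ h2 h h5).elim
  · exact h
  · exact (h6 _ k2 h k5).elim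

theorem Ch1.det {b x y x' y' : ℤ} (h : Ch1 E b x y) (h' : Ch1 E b x' y') : x = x' ∧ y = y' := by
  obtain ⟨h1, h2, h3⟩ := h
  obtain ⟨k1, k2, k3⟩ := h'
  refine ⟨?_, by omega⟩
  rcases lt_trichotomy x x' with h | h | h
  · exact (k3 _ h h2).elim
  · exact h
  · exact (h3 _ h k2).elim

theorem Ch2.det {b x y x' y' : ℤ} (h : Ch2 E b x y) (h' : Ch2 E b x' y') : x = x' ∧ y = y' := by
  obtain ⟨u, v, h1, h2⟩ := h
  obtain ⟨u', v', k1, k2⟩ := h'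
  obtain ⟨rfl, rfl⟩ := h1.det k1
  exact h2.det k2

theorem Ch3.det {b x y x' y' : ℤ} (h : Ch3 E b x y) (h' : Ch3 E b x' y') : x = x' ∧ y = y' := by
  obtain ⟨u, v, h1, h2⟩ := h
  obtain ⟨u', v', k1, k2⟩ := h'
  obtain ⟨rfl, rfl⟩ := h1.det k1
  exact h2.det k2

/-- level-indexed chain -/
def Ch (E : ℤ → ℤ → Prop) (k : ℕ) (b x y : ℤ) : Prop :=
  (k = 1 ∧ Ch1 E b x y) ∨ (k = 2 ∧ Ch2 E b x y) ∨ (k = 3 ∧ Ch3 E b x y)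

theorem Ch.det {k : ℕ} {b x y x' y' : ℤ} (h : Ch E k b x y) (h' : Ch E k b x' y') :
    x = x' ∧ y = y' := by
  rcases h with ⟨rfl, h⟩ | ⟨rfl, h⟩ | ⟨rfl, h⟩ <;> rcases h' with ⟨e, h'⟩ | ⟨e, h'⟩ | ⟨e, h'⟩ <;>
    first | omega | exact h.det h'

/-- comparing different levels -/
theorem Ch.lt {j k : ℕ} {b x y x' y' : ℤ} (h : Ch E j b x y) (h' : Ch E k b x' y') (hjk : j < k) :
    x < x' ∧ (∃ z, y < z ∧ E x z) ∧ (∃ w, x ≤ w ∧ w < x' ∧ E w y') := by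
  rcases h with ⟨rfl, h⟩ | ⟨rfl, h⟩ | ⟨rfl, h⟩ <;> rcases h' with ⟨rfl, h'⟩ | ⟨rfl, h'⟩ | ⟨rfl, h'⟩ <;>
    try omega
  · obtain ⟨u, v, h1, h2⟩ := h'
    obtain ⟨rfl, rfl⟩ := h.det h1
    exact ⟨h2.2.1, ⟨_, h2.1, h2.2.2.1⟩, ⟨_, le_rfl, h2.2.1, h2.2.2.1⟩⟩
  · obtain ⟨u, v, ⟨p, q, h1, h2⟩, h3⟩ := h'
    obtain ⟨rfl, rfl⟩ := h.det h1
    exact ⟨h2.2.1.trans h3.2.1, ⟨_, h2.1, h2.2.2.1⟩, ⟨_, h2.2.1.le, h3.2.1, h3.2.2.1⟩⟩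
  · obtain ⟨u, v, h1, h2⟩ := h'
    obtain ⟨rfl, rfl⟩ := h.det h1
    exact ⟨h2.2.1, ⟨_, h2.1, h2.2.2.1⟩, ⟨_, le_rfl, h2.2.1, h2.2.2.1⟩⟩

theorem Ch.loop (H : PF n E) {k : ℕ} {c x y : ℤ} (h : Ch E k (c + 2 * n) x y)
    (hc : E c (c + 2 * n)) : x = c ∧ y = c + 2 * n := by
  have h1 : Ch E 1 (c + 2 * n) c (c + 2 * n) :=
    Or.inl ⟨rfl, rfl, hc, fun z hz h => by have := H.len h; omega⟩
  by_cases hk : 1 < k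
  · obtain ⟨-, ⟨z, hz, ez⟩, -⟩ := h1.lt h hk
    have := H.len ez
    omega
  · have : k = 1 := by rcases h with ⟨rfl, h⟩ | ⟨rfl, h⟩ | ⟨rfl, h⟩ <;> omega
    subst this
    have := h.det h1
    exact this

theorem Tri.classify (H : Tri n E) {x y : ℤ} (h : E x y) (hl : x + 2 ≤ y) :
    ∃ b, x ≤ b ∧ b ≤ y ∧ ((x < b ∧ Ch1 E b x y) ∨
      (x < b ∧ ∃ x0 y0, x0 + 2 ≤ y0 ∧ Ch1 E b x0 y0 ∧ St E x0 y0 x y) ∨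
      (b = x ∧ Ch3 E b x y ∧ ∃ a0 a1 b1, Star E a0 a1 x b1 y)) := by
  by_cases h1 : ∀ z, z < x → ¬ E z y
  · exact ⟨y, by omega, le_rfl, Or.inl ⟨by omega, rfl, h, h1⟩⟩
  push Not at h1
  obtain ⟨z, hz, ez⟩ := h1
  obtain ⟨x0, -, hx0, ex0, hr0⟩ := greatest_below (P := fun z => E z y) hz ez
  obtain ⟨y0, hy0, hy0', ey0, hc0⟩ := greatest_below (P := fun z => E x0 z) (a := x0 + 2) (b := y)
    (by omega) (H.s2 x0)
  have hA : x < y0 := H.A0 hy0 ex0 hy0' hc0 h hx0 hl hr0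
  have hs : St E x0 y0 x y := ⟨hy0', hx0, ex0, hc0, h, hr0⟩
  by_cases h2 : ∀ z, z < x0 → ¬ E z y0
  · exact ⟨y0, by omega, by omega, Or.inr (Or.inl ⟨hA, x0, y0, hy0, ⟨rfl, ey0, h2⟩, hs⟩)⟩
  push Not at h2
  obtain ⟨z, hz, ez⟩ := h2
  obtain ⟨x1, -, hx1, ex1, hr1⟩ := greatest_below (P := fun z => E z y0) hz ez
  obtain ⟨y1, hy1, hy1', ey1, hc1⟩ := greatest_below (P := fun z => E x1 z) (a := x1 + 2) (b := y0)
    (by omega) (H.s2 x1)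
  have hA1 : x0 < y1 := H.A0 hy1 ex1 hy1' hc1 ey0 hx1 hy0 hr1
  have hg : E y1 y := H.A ⟨hx1, hA1, hy1', hy0'⟩ ey1 ex1 ey0 ex0 hc1 hc0
  have S : Star E x1 x0 y1 y0 y := ⟨⟨hx1, hA1, hy1', hy0'⟩, ey1, ex1, ey0, ex0, hg⟩
  have hxy : x = y1 := by
    rcases lt_trichotomy x y1 with h | h | h
    · exact (S.rB2 H.toPF hx0 h (by assumption)).elim
    · exact h
    · exact (hr0 y1 hA1 h hg).elim
  subst hxy
  refine ⟨x, le_rfl, by omega, Or.inr (Or.inr ⟨rfl, ⟨x0, y0, ⟨x1, x, ⟨rfl, ey1, fun z hz =>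
    S.rB0 H.toPF hz⟩, hy1', hx1, ex1, hc1, ey0, hr1⟩, hs⟩, x1, x0, y0, S⟩)⟩

theorem Tri.L (H : Tri n E) {B y : ℤ} (h : E B y) (hl : B + 2 ≤ y) (hloop : y ≠ B + 2 * n)
    (hlast : ∀ z, y < z → ¬ E B z) : ∃ a0 a1 b1, Star E a0 a1 B b1 y := by
  obtain ⟨b, hb1, hb2, hb⟩ := H.classify h hl
  have hn := H.npos
  have hlen := H.len h
  by_contra hno
  have hj : ∃ j, B < b ∧ Ch E j b B y := by
    rcases hb with h | ⟨h, x0, y0, -, h1, h2⟩ | h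
    · exact ⟨1, h.1, Or.inl ⟨rfl, h.2⟩⟩
    · exact ⟨2, h, Or.inr (Or.inl ⟨rfl, x0, y0, h1, h2⟩)⟩
    · exact (hno h.2.2).elim
  obtain ⟨j, hBb, hj⟩ := hj
  obtain ⟨c, hc1, hc2, hc⟩ : ∃ c, c ≤ B ∧ B < c + n ∧ E c (c + 2 * n) := by
    obtain ⟨c, hc⟩ := H.loop
    have key : ∀ t : ℤ, E (c + t * n) (c + t * n + 2 * n) := by
      intro t
      induction t using Int.induction_on with
      | zero => simpa using hc
      | succ i ih => convert H.up ih using 1 <;> push_cast <;> ring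
      | pred i ih => convert H.dn ih using 1 <;> push_cast <;> ring
    refine ⟨c + (B - c) / n * n, ?_, ?_, key _⟩
    · have := Int.ediv_mul_le (B - c) (show n ≠ 0 by omega); omega
    · have := Int.lt_ediv_add_one_mul_self (B - c) (show 0 < n by omega)
      nlinarith
  have hcm : E (c - n) (c - n + 2 * n) := by have := H.dn hc; convert this using 1; ring
  have hex : ∀ y', B + 3 ≤ y' → ∃ b' k x', B < x' ∧ x' ≤ b' ∧ b' ≤ y' ∧ Ch E k b' x' y' ∧
      ∀ z, B < z → z < x' → ¬ E z y' := by
    intro y' hy'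
    obtain ⟨x', h1, h2, h3, h4⟩ := least_above (P := fun z => E z y') (a := B) (b := y' - 2)
      (by omega) (by have := H.s2 (y' - 2); simpa using this)
    obtain ⟨b', k1, k2, k3⟩ := H.classify h3 (by omega)
    rcases k3 with h | ⟨h, x0, y0, -, k3, k4⟩ | h
    · exact ⟨b', 1, x', h1, k1, k2, Or.inl ⟨rfl, h.2⟩, h4⟩
    · exact ⟨b', 2, x', h1, k1, k2, Or.inr (Or.inl ⟨rfl, x0, y0, k3, k4⟩), h4⟩
    · exact ⟨b', 3, x', h1, k1, k2, Or.inr (Or.inr ⟨rfl, h.2.1⟩), h4⟩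
  choose! f k X hf1 hf2 hf3 hf4 hf5 using hex
  have hinj : Set.InjOn f (Finset.Icc (B + 3) (B + 2 * n) : Finset ℤ) := by
    have aux : ∀ y1 y2, B + 3 ≤ y1 → B + 3 ≤ y2 → f y1 = f y2 → ¬ k y1 < k y2 := by
      intro y1 y2 h1 h2 h3 h4
      have c1 := hf4 y1 h1
      have c2 := hf4 y2 h2
      rw [h3] at c1
      obtain ⟨-, -, w, w1, w2, w3⟩ := c1.lt c2 h4
      exact hf5 y2 h2 w (by have := hf1 y1 h1; omega) w2 w3
    intro y1 h1 y2 h2 h3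
    simp only [Finset.coe_Icc, Set.mem_Icc] at h1 h2
    have e : k y1 = k y2 := by
      have := aux y1 y2 h1.1 h2.1 h3
      have := aux y2 y1 h2.1 h1.1 h3.symm
      omega
    have c1 := hf4 y1 h1.1
    have c2 := hf4 y2 h2.1
    rw [h3, e] at c1
    exact (c1.det c2).2
  have hmiss : ∀ y', B + 3 ≤ y' → f y' ≠ b ∧ f y' ≠ c + n ∧ f y' ≠ c + 2 * n := by
    intro y' hy'
    have c1 := hf4 y' hy'
    have c2 := hf1 y' hy'
    refine ⟨fun h => ?_, fun h => ?_, fun h => ?_⟩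
    · rw [h] at c1
      rcases lt_trichotomy j (k y') with h | h | h
      · obtain ⟨-, ⟨z, hz, ez⟩, -⟩ := hj.lt c1 h
        exact hlast z hz ez
      · rw [← h] at c1
        have := c1.det hj
        omega
      · have := (c1.lt hj h).1
        omega
    · rw [h, show c + n = c - n + 2 * n by ring] at c1
      have := c1.loop H.toPF hcm
      omega
    · rw [h] at c1
      have := c1.loop H.toPF hc
      omega
  have hb' : b ≠ c + n ∧ b ≠ c + 2 * n := by
    refine ⟨fun h => ?_, fun h => ?_⟩
    · rw [h, show c + n = c - n + 2 * n by ring] at hj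
      have := hj.loop H.toPF hcm
      omega
    · rw [h] at hj
      have := hj.loop H.toPF hc
      omega
  have hmaps : ∀ y' ∈ Finset.Icc (B + 3) (B + 2 * n),
      f y' ∈ (((Finset.Ioc B (B + 2 * n)).erase b).erase (c + n)).erase (c + 2 * n) := by
    intro y' hy'
    rw [Finset.mem_Icc] at hy'
    have h1 := hmiss y' hy'.1
    have h2 := hf1 y' hy'.1
    have h3 := hf2 y' hy'.1
    have h4 := hf3 y' hy'.1
    simp only [Finset.mem_erase, Finset.mem_Ioc]
    omega
  have hcard := Finset.card_le_card_of_injOn f hmaps hinj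
  rw [Finset.card_erase_of_mem, Finset.card_erase_of_mem, Finset.card_erase_of_mem] at hcard
  · simp only [Int.card_Icc, Int.card_Ioc] at hcard
    omega
  all_goals simp only [Finset.mem_erase, Finset.mem_Ioc]; omega

/-- S4 -/
theorem Tri.S4 (H : Tri n E) {x y : ℤ} (h : E x y) (hl : x + 2 ≤ y) (hloop : y ≠ x + 2 * n) :
    ∃ a0 a1 b0 b1 b2, Star E a0 a1 b0 b1 b2 ∧
      ((x = a0 ∧ y = b0) ∨ (x = a1 ∧ y = b1) ∨ (x = b0 ∧ y = b2)) := by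
  by_cases hlast : ∀ z, y < z → ¬ E x z
  · obtain ⟨a0, a1, b1, S⟩ := H.L h hl hloop hlast
    exact ⟨_, _, _, _, _, S, by simp⟩
  push Not at hlast
  obtain ⟨z, hz, ez⟩ := hlast
  obtain ⟨y', hy1, -, hy2, hy3⟩ := least_above (P := fun z => E x z) hz ez
  obtain ⟨b, hb1, hb2, hb⟩ := H.classify h hl
  rcases hb with ⟨hxb, hb⟩ | ⟨hxb, x0, y0, hl0, hb, hst⟩ | ⟨-, -, a0, a1, b1, S⟩
  · obtain ⟨rfl, -, hfirst⟩ := hb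
    obtain ⟨x', hx1, hx2, hx3, hx4⟩ := least_above (P := fun z => E z y') (a := x) (b := y' - 2)
      (by omega) (by have := H.s2 (y' - 2); simpa using this)
    have hA := H.A0 hl hy2 hy1 hy3 hx3 hx1 (by omega) hx4
    by_cases hlast : ∀ z, y' < z → ¬ E x' z
    · exfalso
      obtain ⟨a0, a1, b1, S⟩ := H.L hx3 (by omega) (by have := H.len hy2; omega) hlast
      have : a1 = x := by
        rcases lt_trichotomy a1 x with h' | h' | h'
        · exact (S.rB2 H.toPF h' hx1 hy2).elim
        · exact h'
        · exact (hx4 _ h' S.o.2.1 S.e12).elim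
      subst this
      have : b1 = y := by
        rcases lt_trichotomy b1 y with h' | h' | h'
        · exact (S.cA1 H.toPF h' hy1 h).elim
        · exact h'
        · exact (hy3 _ h' S.o.2.2.2 S.e11).elim
      subst this
      exact hfirst a0 S.o.1 S.e01
    · push Not at hlast
      obtain ⟨z, hz, ez⟩ := hlast
      obtain ⟨y'', hz1, -, hz2, hz3⟩ := least_above (P := fun z => E x' z) hz ez
      have := H.A ⟨hx1, hA, hy1, hz1⟩ h hy2 hx3 hz2 hy3 hz3
      exact ⟨x, x', y, y', y'', ⟨⟨hx1, hA, hy1, hz1⟩, h, hy2, hx3, hz2, this⟩, by simp⟩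
  · obtain ⟨rfl, h1, hfirst⟩ := hb
    obtain ⟨k1, k2, k3, k4, k5, k6⟩ := hst
    have hA := H.A0 hl0 k3 k1 k4 h k2 hl k6
    have := H.A ⟨k2, hA, k1, hy1⟩ h1 k3 h hy2 k4 hy3
    exact ⟨_, _, _, _, _, ⟨⟨k2, hA, k1, hy1⟩, h1, k3, h, hy2, this⟩, by simp⟩
  · exact ⟨_, _, _, _, _, S, by simp⟩

/-- S3 -/
theorem Tri.S3 (H : Tri n E) {x y : ℤ} (h : E x y) (hl : x + 2 < y) :
    ∃ a0 a1 b0 b1 b2, Star E a0 a1 b0 b1 b2 ∧ ((x = a0 ∧ y = b1) ∨ (x = a1 ∧ y = b2)) := by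
  obtain ⟨x', hx1, hx2, hx3, hx4⟩ := least_above (P := fun z => E z y) (a := x) (b := y - 2)
      (by omega) (by have := H.s2 (y - 2); simpa using this)
  obtain ⟨a0, a1, b0, b1, b2, S, h'⟩ := H.S4 hx3 (by omega) (by have := H.len h; omega)
  refine ⟨a0, a1, b0, b1, b2, S, ?_⟩
  rcases h' with ⟨rfl, rfl⟩ | ⟨rfl, rfl⟩ | ⟨rfl, rfl⟩
  · exact (S.rB0 H.toPF hx1 h).elim
  · left
    refine ⟨?_, rfl⟩
    rcases lt_trichotomy x a0 with h' | h' | h'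
    · exact (hx4 _ h' S.o.1 S.e01).elim
    · exact h'
    · exact (S.rB1 H.toPF h' hx1 h).elim
  · right
    refine ⟨?_, rfl⟩
    rcases lt_trichotomy x a1 with h' | h' | h'
    · exact (hx4 _ h' S.o.2.1 S.e12).elim
    · exact h'
    · exact (S.rB2 H.toPF h' hx1 h).elim

/-- S1 -/
theorem Tri.S1 (H : Tri n E) {x y : ℤ} (h : ¬ E x y) (hl : x + 2 < y) (hl2 : y ≤ x + 2 * n) :
    ∃ a0 a1 b0 b1 b2, Star E a0 a1 b0 b1 b2 ∧
      ((y = b0 ∧ x < a0) ∨ (y = b1 ∧ a0 < x ∧ x < a1) ∨ (y = b2 ∧ a1 < x ∧ x < b0)) := by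
  obtain ⟨x', hx1, hx2, hx3, hx4⟩ := least_above (P := fun z => E z y) (a := x) (b := y - 2)
      (by omega) (by have := H.s2 (y - 2); simpa using this)
  obtain ⟨a0, a1, b0, b1, b2, S, h'⟩ := H.S4 hx3 (by omega) (by omega)
  refine ⟨a0, a1, b0, b1, b2, S, ?_⟩
  rcases h' with ⟨rfl, rfl⟩ | ⟨rfl, rfl⟩ | ⟨rfl, rfl⟩
  · exact Or.inl ⟨rfl, hx1⟩
  · refine Or.inr (Or.inl ⟨rfl, ?_, hx1⟩)
    rcases lt_trichotomy x a0 with h' | h' | h'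
    · exact (hx4 _ h' S.o.1 S.e01).elim
    · subst h'; exact (h S.e01).elim
    · exact h'
  · refine Or.inr (Or.inr ⟨rfl, ?_, hx1⟩)
    rcases lt_trichotomy x a1 with h' | h' | h'
    · exact (hx4 _ h' S.o.2.1 S.e12).elim
    · subst h'; exact (h S.e12).elim
    · exact h'

/-- S2 -/
theorem Tri.S2 (H : Tri n E) {x y : ℤ} (h : ¬ E x y) (hl : x + 2 < y) (hl2 : y ≤ x + 2 * n) :
    ∃ a0 a1 b0 b1 b2, Star E a0 a1 b0 b1 b2 ∧
      ((x = b0 ∧ b2 < y) ∨ (x = a1 ∧ b1 < y ∧ y < b2) ∨ (x = a0 ∧ b0 < y ∧ y < b1)) := by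
  obtain ⟨a0, a1, b0, b1, b2, S, h'⟩ := H.refl.S1 (x := -y) (y := -x)
    (by simpa [Rf] using h) (by omega) (by omega)
  exact ⟨_, _, _, _, _, S.unrefl, by omega⟩

/-- uniqueness of a loop orbit -/
theorem PF.loop_unique (H : PF n E) {c c' : ℤ} (h : E c (c + 2 * n)) (h' : E c' (c' + 2 * n))
    (h1 : c < c') (h2 : c' < c + n) : False := H.F h h' (H.up h) (by have := H.npos; omega)

end PB

section PC
variable {n : ℤ} {E : ℤ → ℤ → Prop}

theorem PF.tr (H : PF n E) {x y : ℤ} (h : E x y) (t : ℤ) : E (x + t * n) (y + t * n) := by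
  induction t using Int.induction_on with
  | zero => simpa using h
  | succ i ih => convert H.up ih using 1 <;> ring
  | pred i ih => convert H.dn ih using 1 <;> ring

theorem Star.tr (H : PF n E) {a0 a1 b0 b1 b2 : ℤ} (S : Star E a0 a1 b0 b1 b2) (t : ℤ) :
    Star E (a0 + t * n) (a1 + t * n) (b0 + t * n) (b1 + t * n) (b2 + t * n) :=
  ⟨by have := S.o; omega, H.tr S.e00 t, H.tr S.e01 t, H.tr S.e11 t, H.tr S.e12 t, H.tr S.e02 t⟩

/-- adding an orbit -/
def Ad (n : ℤ) (E : ℤ → ℤ → Prop) (u v : ℤ) : ℤ → ℤ → Prop :=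
  fun x y => E x y ∨ ∃ t : ℤ, x = u + t * n ∧ y = v + t * n

theorem PF.two_new (H : PF n E) {x y p q : ℤ} (hl : y ≤ x + 2 * n) (e : E p q)
    (hp : (p < x ∧ x + n < q ∧ q < y) ∨ (x < p ∧ p < x + n ∧ x + n < y ∧ y < q ∧ q < y + n) ∨
      (x + n < p ∧ p < y ∧ y + n < q)) :
    Blk1 E x y ∨ (BlkB n E x y ∧ y ≠ x + 2 * n) := by
  have hle := H.len e
  have hn := H.npos
  rcases hp with h | h | h
  · exact Or.inl ⟨p, q, p + n, q + n, e, H.up e, by omega⟩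
  · by_cases h' : q ≤ p + n
    · exact Or.inr ⟨⟨p, q, e, by omega⟩, by omega⟩
    · exact Or.inl ⟨p - n, q - n, p, q, H.dn e, e, by omega⟩
  · exact Or.inl ⟨p - n, q - n, p, q, H.dn e, e, by omega⟩

theorem PF.two_new' (H : PF n E) {x y p q t s : ℤ} (hl : y ≤ x + 2 * n) (e : E p q)
    (hts : x + t * n < x + s * n) (hts2 : x + s * n < y + t * n)
    (hp : (p < x + t * n ∧ x + s * n < q ∧ q < y + t * n) ∨
      (x + t * n < p ∧ p < x + s * n ∧ y + t * n < q ∧ q < y + s * n) ∨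
      (x + s * n < p ∧ p < y + t * n ∧ y + s * n < q)) :
    Blk1 E x y ∨ (BlkB n E x y ∧ y ≠ x + 2 * n) := by
  have hn := H.npos
  have h1 : t < s := by
    by_contra h
    have : s * n ≤ t * n := by nlinarith
    omega
  have h2 : s < t + 2 := by
    by_contra h
    have : (t + 2) * n ≤ s * n := by nlinarith
    have : (t + 2) * n = t * n + 2 * n := by ring
    omega
  obtain rfl : s = t + 1 := by omega
  have h3 : (t + 1) * n = t * n + n := by ring
  rw [h3] at hp hts hts2
  have h4 : (-t) * n = -(t * n) := by ring
  have := H.tr e (-t)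
  rw [h4] at this
  exact H.two_new hl this (by omega)

theorem PF.one_new (H : PF n E) {x y p q r s t : ℤ} (e : E p q) (e' : E r s)
    (h : r < q ∧ p < r ∧ q < s ∧
    ((x + t * n < p ∧ r < y + t * n ∧ y + t * n < q) ∨
      (p < x + t * n ∧ x + t * n < r ∧ q < y + t * n ∧ y + t * n < s) ∨
      (r < x + t * n ∧ x + t * n < q ∧ s < y + t * n))) : Blk1 E x y := by
  have h4 : (-t) * n = -(t * n) := by ring
  have h1 := H.tr e (-t)
  have h2 := H.tr e' (-t)
  rw [h4] at h1 h2
  exact ⟨_, _, _, _, h1, h2, by omega⟩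

/-- Extension lemma. -/
theorem PF.ext (H : PF n E) {x y : ℤ} (hxy : x < y) (hl : y ≤ x + 2 * n)
    (hb : ¬ (Blk1 E x y ∨ (BlkB n E x y ∧ y ≠ x + 2 * n))) : PF n (Ad n E x y) where
  lt h := by
    rcases h with h | ⟨t, rfl, rfl⟩
    · exact H.lt h
    · omega
  up h := by
    rcases h with h | ⟨t, rfl, rfl⟩
    · exact Or.inl (H.up h)
    · exact Or.inr ⟨t + 1, by ring, by ring⟩
  dn h := by
    rcases h with h | ⟨t, rfl, rfl⟩
    · exact Or.inl (H.dn h)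
    · exact Or.inr ⟨t - 1, by ring, by ring⟩
  npos := H.npos
  F h1 h2 h3 h := by
    have hn := H.npos
    rcases h1 with h1 | ⟨t1, rfl, rfl⟩ <;> rcases h2 with h2 | ⟨t2, rfl, rfl⟩ <;>
      rcases h3 with h3 | ⟨t3, rfl, rfl⟩
    · exact H.F h1 h2 h3 h
    · exact hb (Or.inl (H.one_new (t := t3) h1 h2 (by omega)))
    · exact hb (Or.inl (H.one_new (t := t2) h1 h3 (by omega)))
    · exact hb (H.two_new' (t := t2) (s := t3) hl h1 (by omega) (by omega) (by omega))
    · exact hb (Or.inl (H.one_new (t := t1) h2 h3 (by omega)))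
    · exact hb (H.two_new' (t := t1) (s := t3) hl h2 (by omega) (by omega) (by omega))
    · exact hb (H.two_new' (t := t1) (s := t2) hl h3 (by omega) (by omega) (by omega))
    · have h12 : t1 + 1 ≤ t2 := by
        by_contra hh
        have : t2 * n ≤ t1 * n := by nlinarith
        omega
      have h23 : t1 + 2 ≤ t3 := by
        by_contra hh
        have : t3 * n ≤ t2 * n := by nlinarith
        omega
      have : (t1 + 2) * n ≤ t3 * n := by nlinarith
      have : (t1 + 2) * n = t1 * n + 2 * n := by ring
      omega

/-- the relation of a set of edges -/
def rel (T : Set Edge) : ℤ → ℤ → Prop := fun x y => (x, y) ∈ T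

theorem crosses_iff {e f : Edge} (he : e.1 < e.2) (hf : f.1 < f.2) : Crosses e f ↔
    (e.1 < f.1 ∧ f.1 < e.2 ∧ e.2 < f.2) ∨ (f.1 < e.1 ∧ e.1 < f.2 ∧ f.2 < e.2) := by
  unfold Crosses
  rw [min_eq_left he.le, max_eq_right he.le, min_eq_left hf.le, max_eq_right hf.le]

theorem cf_iff {T : Set Edge} (hv : ValidEdges T) : CrossingFree 3 T ↔
    ∀ {x1 y1 x2 y2 x3 y3 : ℤ}, rel T x1 y1 → rel T x2 y2 → rel T x3 y3 →
    (x1 < x2 ∧ x2 < x3 ∧ x3 < y1 ∧ y1 < y2 ∧ y2 < y3) → False := by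
  constructor
  · intro h x1 y1 x2 y2 x3 y3 h1 h2 h3 ho
    apply h
    refine ⟨{(x1, y1), (x2, y2), (x3, y3)}, ?_, ?_, ?_⟩
    · intro e he
      simp only [Finset.coe_insert, Finset.coe_singleton, Set.mem_insert_iff,
        Set.mem_singleton_iff] at he
      rcases he with rfl | rfl | rfl <;> assumption
    · rw [Finset.card_eq_three]
      refine ⟨_, _, _, ?_, ?_, ?_, rfl⟩ <;> (intro h; rw [Prod.mk.injEq] at h; omega)
    · intro e he f hf hef
      simp only [Finset.mem_insert, Finset.mem_singleton] at he hf
      rcases he with rfl | rfl | rfl <;> rcases hf with rfl | rfl | rfl <;>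
        first
        | exact (hef rfl).elim
        | (rw [crosses_iff (by simp only; omega) (by simp only; omega)]; simp only; omega)
  · rintro h ⟨S, hS, hc, hp⟩
    obtain ⟨a, b, c, hab, hac, hbc, rfl⟩ := Finset.card_eq_three.1 hc
    have ha : a ∈ T := hS (by simp)
    have hb : b ∈ T := hS (by simp)
    have hc' : c ∈ T := hS (by simp)
    have h1 := (crosses_iff (hv _ ha) (hv _ hb)).1 (hp a (by simp) b (by simp) hab)
    have h2 := (crosses_iff (hv _ ha) (hv _ hc')).1 (hp a (by simp) c (by simp) hac)
    have h3 := (crosses_iff (hv _ hb) (hv _ hc')).1 (hp b (by simp) c (by simp) hbc)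
    have A : rel T a.1 a.2 := ha
    have B : rel T b.1 b.2 := hb
    have C : rel T c.1 c.2 := hc'
    rcases lt_or_ge a.1 b.1 with h4 | h4 <;> rcases lt_or_ge a.1 c.1 with h5 | h5 <;>
      rcases lt_or_ge b.1 c.1 with h6 | h6 <;>
    first
    | omega
    | exact h A B C (by omega)
    | exact h A C B (by omega)
    | exact h B A C (by omega)
    | exact h B C A (by omega)
    | exact h C A B (by omega)
    | exact h C B A (by omega)

theorem pf_of {n : ℕ} (hn : 2 ≤ n) {T : Set Edge} (hv : ValidEdges T) (hp : Periodic n T)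
    (hc : CrossingFree 3 T) : PF (n : ℤ) (rel T) where
  lt h := hv _ h
  up {x y} h := (hp (x, y)).1 h
  dn {x y} h := (hp (x - n, y - n)).2 (by simpa [shift, rel] using h)
  F := (cf_iff hv).1 hc
  npos := by omega

theorem of_pf {n : ℕ} {T : Set Edge} (H : PF (n : ℤ) (rel T)) :
    ValidEdges T ∧ Periodic n T ∧ CrossingFree 3 T := by
  have hv : ValidEdges T := fun e he => H.lt (x := e.1) (y := e.2) he
  refine ⟨hv, fun e => ⟨fun h => H.up (x := e.1) (y := e.2) h, fun h => ?_⟩,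
    (cf_iff hv).2 (fun h1 h2 h3 h => H.F h1 h2 h3 h)⟩
  have := H.dn (x := e.1 + n) (y := e.2 + n) h
  simpa [rel] using this

theorem rel_union {n : ℕ} {T : Set Edge} {x y : ℤ} :
    rel (T ∪ orbitOf n (x, y)) = Ad n (rel T) x y := by
  funext p q
  simp [rel, Ad, orbitOf, shift]

theorem tri_of {n : ℕ} (hn : 2 ≤ n) {T : Set Edge} (hT : IsTriangulation n 2 T) :
    Tri (n : ℤ) (rel T) := by
  obtain ⟨hv, hp, hc, hm⟩ := hT
  have H := pf_of hn hv hp hc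
  have key : ∀ {x y : ℤ}, x < y → y ≤ x + 2 * (n : ℤ) → ¬ rel T x y →
      Blk1 (rel T) x y ∨ (BlkB n (rel T) x y ∧ y ≠ x + 2 * (n : ℤ)) := by
    intro x y h1 h2 h3
    by_contra hb
    have := H.ext h1 h2 hb
    rw [← rel_union] at this
    obtain ⟨k1, k2, k3⟩ := of_pf this
    have h5 := hm _ k1 k2 k3 Set.subset_union_left
    apply h3
    have : (x, y) ∈ T ∪ orbitOf n (x, y) := Or.inr ⟨0, by simp [shift]⟩
    rw [h5] at this
    exact this
  refine { toPF := H, s1 := ?_, s2 := ?_, blk := ?_, blk2 := ?_ }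
  · intro x
    by_contra h
    rcases key (by omega) (by omega) h with ⟨p, q, r, s, e1, e2, h3⟩ | ⟨⟨p, q, e1, h⟩, h'⟩ <;> omega
  · intro x
    by_contra h
    rcases key (by omega) (by omega) h with ⟨p, q, r, s, e1, e2, h3⟩ | ⟨⟨p, q, e1, h⟩, h'⟩ <;> omega
  · intro x y h1 h2 h3
    exact (key h1 h2 h3).imp_right And.left
  · intro x h
    rcases key (by omega) le_rfl h with h | h
    · exact h
    · exact (h.2 rfl).elim

/-! star uniqueness -/
section
variable {a0 a1 b0 b1 b2 a0' a1' b0' b1' b2' : ℤ}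

theorem Star.next_a1 (H : PF n E) (S : Star E a0 a1 b0 b1 b2) (S' : Star E a0 a1' b0' b1 b2') :
    a1 = a1' := by
  rcases lt_trichotomy a1 a1' with h | h | h
  · exact (S'.rB1 H S.o.1 h S.e11).elim
  · exact h
  · exact (S.rB1 H S'.o.1 h S'.e11).elim

theorem Star.next_b2 (H : PF n E) (S : Star E a0 a1 b0 b1 b2) (S' : Star E a0' a1 b0' b1 b2') :
    b2 = b2' := by
  rcases lt_trichotomy b2 b2' with h | h | h
  · exact (S'.cA1 H S.o.2.2.2 h S.e12).elim
  · exact h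
  · exact (S.cA1 H S'.o.2.2.2 h S'.e12).elim

theorem Star.prev_b0 (H : PF n E) (S : Star E a0 a1 b0 b1 b2) (S' : Star E a0 a1' b0' b1 b2') :
    b0 = b0' := by
  rcases lt_trichotomy b0 b0' with h | h | h
  · exact (S.cA0 H h S'.o.2.2.1 S'.e00).elim
  · exact h
  · exact (S'.cA0 H h S.o.2.2.1 S.e00).elim

theorem Star.next_b0 (H : PF n E) (S : Star E a0 a1 b0 b1 b2) (S' : Star E a0' a1 b0' b1' b2) :
    b0 = b0' := by
  rcases lt_trichotomy b0 b0' with h | h | h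
  · exact (S'.rB2 H S.o.2.1 h S.e02).elim
  · exact h
  · exact (S.rB2 H S'.o.2.1 h S'.e02).elim

theorem Star.next_b1 (H : PF n E) (S : Star E a0 a1 b0 b1 b2) (S' : Star E a0 a1' b0 b1' b2') :
    b1 = b1' := by
  rcases lt_trichotomy b1 b1' with h | h | h
  · exact (S'.cA0 H S.o.2.2.1 h S.e01).elim
  · exact h
  · exact (S.cA0 H S'.o.2.2.1 h S'.e01).elim

theorem Star.first_a0 (H : PF n E) (S : Star E a0 a1 b0 b1 b2) (S' : Star E a0' a1' b0 b1' b2') :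
    a0 = a0' := by
  rcases lt_trichotomy a0 a0' with h | h | h
  · exact (S'.rB0 H h S.e00).elim
  · exact h
  · exact (S.rB0 H h S'.e00).elim

theorem Star.uniq (H : PF n E) (S : Star E a0 a1 b0 b1 b2) (S' : Star E a0' a1' b0 b1' b2') :
    a0 = a0' ∧ a1 = a1' ∧ b1 = b1' ∧ b2 = b2' := by
  obtain rfl := S.first_a0 H S'
  obtain rfl := S.next_b1 H S'
  obtain rfl := S.next_a1 H S'
  obtain rfl := S.next_b2 H S'
  simp

theorem Star.ne_mixed (H : PF n E) (S : Star E a0 a1 b0 b1 b2) (S' : Star E a0' a1' b0' b1' b2')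
    (h1 : a0 = a1') (h2 : b1 = b2') : False := by
  subst h1 h2
  have : b0 = b1' := by
    rcases lt_trichotomy b0 b1' with h | h | h
    · exact (S.cA0 H h S'.o.2.2.2 S'.e11).elim
    · exact h
    · exact (S'.cA1 H h S.o.2.2.1 S.e00).elim
  subst this
  exact S.rB0 H S'.o.1 S'.e01

theorem Star.med_ne_loop (H : PF n E) (S : Star E a0 a1 b0 b1 b2) {c : ℤ}
    (hc : E c (c + 2 * n)) (h : b0 = c) : False := by
  subst h
  have h1 : E (b0 - 2 * n) b0 := by
    have := H.dn (H.dn hc)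
    convert this using 1 <;> ring
  have := H.len S.e01
  have := S.o
  exact S.rB0 H (by omega) h1
end

theorem Tri.star_at (H : Tri n E) {b : ℤ} (hb : ¬ E b (b + 2 * n)) :
    ∃ a0 a1 b1 b2, Star E a0 a1 b b1 b2 := by
  have hn := H.npos
  obtain ⟨x, hx1, hx2, hx3, hx4⟩ := least_above (P := fun z => E z b) (a := b - 2 * n - 1)
    (b := b - 2) (by omega) (by have := H.s2 (b - 2); simpa using this)
  have hf : ∀ z, z < x → ¬ E z b := fun z hz ez => by
    have := H.len ez
    exact hx4 z (by omega) hz ez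
  obtain ⟨a0, a1, b0, b1, b2, S, h⟩ := H.S4 hx3 (by omega) (fun h => by
    apply hb
    have := H.up (H.up hx3)
    convert this using 1 <;> omega)
  rcases h with ⟨rfl, rfl⟩ | ⟨rfl, rfl⟩ | ⟨rfl, rfl⟩
  · exact ⟨_, _, _, _, S⟩
  · exact (hf _ S.o.1 S.e01).elim
  · exact (hf _ S.o.2.1 S.e12).elim

theorem mem_orbit_self {n : ℕ} (e : Edge) : e ∈ orbitOf n e := ⟨0, by simp [shift]⟩

theorem orbit_eq_iff {n : ℕ} {e f : Edge} : orbitOf n e = orbitOf n f ↔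
    ∃ t : ℤ, f = shift e (t * n) := by
  constructor
  · intro h
    have := mem_orbit_self (n := n) f
    rw [← h] at this
    exact this
  · rintro ⟨t, rfl⟩
    ext g
    constructor
    · rintro ⟨s, rfl⟩
      refine ⟨s - t, ?_⟩
      simp only [shift, Prod.mk.injEq]
      constructor <;> ring
    · rintro ⟨s, rfl⟩
      refine ⟨s + t, ?_⟩
      simp only [shift, Prod.mk.injEq]
      constructor <;> ring

theorem mod_uniq {n b b' c t : ℤ} (h1 : c < b) (h2 : b < c + n) (h3 : c < b') (h4 : b' < c + n)
    (h : b + t * n = b') : b = b' := by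
  have : t = 0 := by
    by_contra ht
    rcases lt_or_gt_of_ne ht with h | h
    · have : t * n ≤ -n := by nlinarith
      omega
    · have : n ≤ t * n := by nlinarith
      omega
  subst this; omega

def relevant (n : ℕ) (T : Set Edge) : Set Edge :=
  {e ∈ T | 2 < e.2 - e.1 ∧ e.2 - e.1 ≤ 2 * (n : ℤ)}

theorem part1 {n : ℕ} {T : Set Edge} (H : Tri (n : ℤ) (rel T)) :
    ((orbitOf n) '' relevant n T).ncard = 2 * (n - 1) := by
  have hn := H.npos
  obtain ⟨c, hc⟩ := H.loop
  have hex : ∀ b : ℤ, c < b → b < c + n → ∃ a0 a1 b1 b2, Star (rel T) a0 a1 b b1 b2 :=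
    fun b h1 h2 => H.star_at fun h => H.loop_unique hc h h1 h2
  choose! A0 A1 B1 B2 hS using hex
  set φ : ℤ × Bool → Set Edge := fun p =>
    if p.2 then orbitOf n (A0 p.1, B1 p.1) else orbitOf n (A1 p.1, B2 p.1) with hφ
  have hmain : (orbitOf n) '' relevant n T =
      φ '' ((Finset.Ioo c (c + n) ×ˢ (Finset.univ : Finset Bool) : Finset (ℤ × Bool)) : Set _) := by
    ext o
    constructor
    · rintro ⟨⟨x, y⟩, ⟨h1, h2, h3⟩, rfl⟩
      simp only at h2 h3
      obtain ⟨a0, a1, b0, b1, b2, S, h⟩ := H.S3 (x := x) (y := y) h1 (by omega)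
      obtain ⟨t, ht1, ht2⟩ : ∃ t : ℤ, c < b0 + t * n ∧ b0 + t * n < c + n := by
        have hpos : (0 : ℤ) < n := by omega
        refine ⟨-((b0 - c) / n), ?_, ?_⟩
        · have h5 := Int.emod_nonneg (b0 - c) (show (n : ℤ) ≠ 0 by omega)
          have h6 := Int.emod_add_mul_ediv (b0 - c) n
          rcases eq_or_lt_of_le h5 with h7 | h7
          · exfalso
            have h8 : rel T (c + (b0 - c) / n * n) (c + (b0 - c) / n * n + 2 * n) := by
              have := H.tr hc ((b0 - c) / n)
              convert this using 1; ring
            exact S.med_ne_loop H.toPF h8 (by linarith)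
          · linarith
        · have h5 := Int.emod_lt_of_pos (b0 - c) hpos
          have h6 := Int.emod_add_mul_ediv (b0 - c) n
          linarith
      have S' := S.tr H.toPF t
      obtain ⟨k1, k2, k3, k4⟩ := S'.uniq H.toPF (hS _ ht1 ht2)
      rcases h with ⟨rfl, rfl⟩ | ⟨rfl, rfl⟩
      · refine ⟨(b0 + t * n, true), by simp; omega, ?_⟩
        simp only [hφ, if_true]
        rw [eq_comm, orbit_eq_iff]
        exact ⟨t, by simp only [shift]; rw [k1, k3]⟩
      · refine ⟨(b0 + t * n, false), by simp; omega, ?_⟩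
        simp only [hφ]
        rw [eq_comm]
        simp only [Bool.false_eq_true, if_false]
        rw [orbit_eq_iff]
        exact ⟨t, by simp only [shift]; rw [k2, k4]⟩
    · rintro ⟨⟨b, i⟩, hb, rfl⟩
      simp only [Finset.coe_product, Set.mem_prod, Finset.coe_Ioo, Set.mem_Ioo] at hb
      have S := hS b hb.1.1 hb.1.2
      have := S.o
      cases i
      · refine ⟨(A1 b, B2 b), ⟨S.e12, ?_, ?_⟩, by simp [hφ]⟩
        · simp only; omega
        · have := H.len S.e12; simp only; omega
      · refine ⟨(A0 b, B1 b), ⟨S.e01, ?_, ?_⟩, by simp [hφ]⟩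
        · simp only; omega
        · have := H.len S.e01; simp only; omega
  rw [hmain, Set.InjOn.ncard_image, Set.ncard_coe_finset, Finset.card_product]
  · simp only [Int.card_Ioo, Finset.card_univ, Fintype.card_bool]
    omega
  · rintro ⟨b, i⟩ hb ⟨b', i'⟩ hb' h
    simp only [Finset.coe_product, Set.mem_prod, Finset.coe_Ioo, Set.mem_Ioo] at hb hb'
    have S := hS b hb.1.1 hb.1.2
    have S' := hS b' hb'.1.1 hb'.1.2
    cases i <;> cases i' <;> simp only [hφ, Bool.false_eq_true, if_false, if_true] at h <;>
      rw [orbit_eq_iff] at h <;> obtain ⟨t, h⟩ := h <;> simp only [shift, Prod.mk.injEq] at h <;>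
      have St := S.tr H.toPF t
    · rw [h.1, h.2] at S'
      have := St.next_b0 H.toPF S'
      have := mod_uniq hb.1.1 hb.1.2 hb'.1.1 hb'.1.2 this
      rw [this]
    · exact (S'.ne_mixed H.toPF St h.1 h.2).elim
    · exact (St.ne_mixed H.toPF S' h.1.symm h.2.symm).elim
    · rw [h.1, h.2] at S'
      have := St.prev_b0 H.toPF S'
      have := mod_uniq hb.1.1 hb.1.2 hb'.1.1 hb'.1.2 this
      rw [this]

end PC

section PD
variable {n : ℤ} {E : ℤ → ℤ → Prop}

/-- removing an orbit -/
def Rm (n : ℤ) (E : ℤ → ℤ → Prop) (u v : ℤ) : ℤ → ℤ → Prop :=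
  fun x y => E x y ∧ ¬ ∃ t : ℤ, u = x + t * n ∧ v = y + t * n

theorem PF.rm (H : PF n E) (u v : ℤ) : PF n (Rm n E u v) where
  lt h := H.lt h.1
  up h := ⟨H.up h.1, fun ⟨t, h1, h2⟩ => h.2 ⟨t + 1, by rw [h1]; ring, by rw [h2]; ring⟩⟩
  dn h := ⟨H.dn h.1, fun ⟨t, h1, h2⟩ => h.2 ⟨t - 1, by rw [h1]; ring, by rw [h2]; ring⟩⟩
  F h1 h2 h3 h := H.F h1.1 h2.1 h3.1 h
  npos := H.npos

/-- symmetric form of crossing -/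
def X (x1 y1 x2 y2 : ℤ) : Prop :=
  (x1 < x2 ∧ x2 < y1 ∧ y1 < y2) ∨ (x2 < x1 ∧ x1 < y2 ∧ y2 < y1)

def RD (E : ℤ → ℤ → Prop) (u v r1 r3 r4 : ℤ) : Prop :=
  Star E u r1 v r3 r4 ∨ Star E r4 u r1 v r3 ∨ Star E r3 r4 u r1 v
def SD (E : ℤ → ℤ → Prop) (u v t1 t3 t4 : ℤ) : Prop :=
  Star E u t3 t4 v t1 ∨ Star E t1 u t3 t4 v

theorem RD.uniq (H : PF n E) {u v r1 r3 r4 r1' r3' r4' : ℤ} (h : RD E u v r1 r3 r4)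
    (h' : RD E u v r1' r3' r4') : r1' = r1 ∧ r3' = r3 ∧ r4' = r4 := by
  rcases h with S | S | S <;> rcases h' with S' | S' | S'
  · have := S.uniq H S'; omega
  · exact (S.rB0 H S'.o.1 S'.e01).elim
  · exact (S.rB0 H S'.o.2.1 S'.e12).elim
  · exact (S'.rB0 H S.o.1 S.e01).elim
  · obtain rfl := S.next_b2 H S'
    obtain rfl := S.next_b0 H S'
    have := S.uniq H S'
    omega
  · exact (S'.cB0 H S.o.2.2.2 S.e12).elim
  · exact (S'.rB0 H S.o.2.1 S.e12).elim
  · exact (S.cB0 H S'.o.2.2.2 S'.e12).elim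
  · have := S.uniq H S'; omega

theorem SD.uniq (H : PF n E) {u v t1 t3 t4 t1' t3' t4' : ℤ} (h : SD E u v t1 t3 t4)
    (h' : SD E u v t1' t3' t4') : t1' = t1 ∧ t3' = t3 ∧ t4' = t4 := by
  rcases h with S | S <;> rcases h' with S' | S'
  · obtain rfl := S.prev_b0 H S'
    have := S.uniq H S'
    omega
  · exact (S.ne_mixed H S' rfl rfl).elim
  · exact (S'.ne_mixed H S rfl rfl).elim
  · obtain rfl := S.next_b0 H S'
    have := S.uniq H S'
    omega

theorem RD.nonloop (H : PF n E) {u v r1 r3 r4 : ℤ} (h : RD E u v r1 r3 r4) : v ≠ u + 2 * n := by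
  intro hv
  rcases h with S | S | S
  · have := H.len S.e01; have := S.o; omega
  · have := H.len S.e12; have := S.o; omega
  · have := H.len S.e12; have := S.o; omega

def YC (E : ℤ → ℤ → Prop) (u v r1 r3 r4 t1 t3 t4 x y : ℤ) : Prop :=
  (Star E u t3 t4 v t1 ∧ y = t4 ∧ x < u) ∨ (Star E t1 u t3 t4 v ∧ y = t3 ∧ x < t1) ∨
  (Star E t1 u t3 t4 v ∧ y = t4 ∧ t1 < x ∧ x < u) ∨ (Star E u r1 v r3 r4 ∧ y = r3 ∧ u < x ∧ x < r1) ∨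
  (Star E u r1 v r3 r4 ∧ y = r4 ∧ r1 < x ∧ x < v) ∨ (Star E r4 u r1 v r3 ∧ y = r3 ∧ u < x ∧ x < r1)

def XC (E : ℤ → ℤ → Prop) (u v r1 r3 r4 t1 t3 t4 x y : ℤ) : Prop :=
  (Star E u t3 t4 v t1 ∧ x = t4 ∧ t1 < y) ∨ (Star E t1 u t3 t4 v ∧ x = t3 ∧ v < y) ∨
  (Star E u t3 t4 v t1 ∧ x = t3 ∧ v < y ∧ y < t1) ∨ (Star E r3 r4 u r1 v ∧ x = r4 ∧ r1 < y ∧ y < v) ∨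
  (Star E r4 u r1 v r3 ∧ x = r4 ∧ r1 < y ∧ y < v) ∨ (Star E r3 r4 u r1 v ∧ x = r3 ∧ u < y ∧ y < r1)

theorem toAd {u v x y p q : ℤ} (h : E p q) :
    (∃ t : ℤ, u = p + t * n ∧ v = q + t * n) ∨ Ad n (Rm n E u v) x y p q := by
  by_cases h' : ∃ t : ℤ, u = p + t * n ∧ v = q + t * n
  · exact Or.inl h'
  · exact Or.inr (Or.inl ⟨h, h'⟩)

theorem Ad.self {x y : ℤ} : Ad n E x y x y := Or.inr ⟨0, by ring, by ring⟩

section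
variable {u v r1 r3 r4 t1 t3 t4 x y : ℤ}

theorem candY (H : Tri n E)
    (hS : ∀ {t1' t3' t4'}, SD E u v t1' t3' t4' → t1' = t1 ∧ t3' = t3 ∧ t4' = t4)
    (hR : ∀ {r1' r3' r4'}, RD E u v r1' r3' r4' → r1' = r1 ∧ r3' = r3 ∧ r4' = r4)
    (hne : ¬ E x y) (hl : x + 2 < y) (HH : PF n (Ad n (Rm n E u v) x y)) :
    ∃ t, YC E u v r1 r3 r4 t1 t3 t4 (x + t * n) (y + t * n) := by
  obtain ⟨a0, a1, b0, b1, b2, Q, h⟩ := H.S1 hne hl (HH.len Ad.self)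
  have ho := Q.o
  rcases h with ⟨rfl, h⟩ | ⟨rfl, h, h'⟩ | ⟨rfl, h, h'⟩
  · rcases toAd (u := u) (v := v) (x := x) (y := y) (n := n) Q.e01 with ⟨t, h1, h2⟩ | A
    · have Q' := Q.tr H.toPF t
      rw [← h1, ← h2] at Q'
      obtain ⟨k1, k2, k3⟩ := hS (Or.inl Q')
      rw [k1, k2, k3] at Q'
      exact ⟨t, Or.inl ⟨Q', by omega, by omega⟩⟩
    rcases toAd (u := u) (v := v) (x := x) (y := y) (n := n) Q.e12 with ⟨t, h1, h2⟩ | B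
    · have Q' := Q.tr H.toPF t
      rw [← h1, ← h2] at Q'
      obtain ⟨k1, k2, k3⟩ := hS (Or.inr Q')
      rw [k1, k2, k3] at Q'
      exact ⟨t, Or.inr (Or.inl ⟨Q', by omega, by omega⟩)⟩
    exact (HH.F Ad.self A B (by omega)).elim
  · rcases toAd (u := u) (v := v) (x := x) (y := y) (n := n) Q.e00 with ⟨t, h1, h2⟩ | A
    · have Q' := Q.tr H.toPF t
      rw [← h1, ← h2] at Q'
      obtain ⟨k1, k2, k3⟩ := hR (Or.inl Q')
      rw [k1, k2, k3] at Q'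
      exact ⟨t, Or.inr (Or.inr (Or.inr (Or.inl ⟨Q', by omega, by omega⟩)))⟩
    rcases toAd (u := u) (v := v) (x := x) (y := y) (n := n) Q.e12 with ⟨t, h1, h2⟩ | B
    · have Q' := Q.tr H.toPF t
      rw [← h1, ← h2] at Q'
      obtain ⟨k1, k2, k3⟩ := hS (Or.inr Q')
      rw [k1, k2, k3] at Q'
      exact ⟨t, Or.inr (Or.inr (Or.inl ⟨Q', by omega, by omega⟩))⟩
    exact (HH.F A Ad.self B (by omega)).elim
  · rcases toAd (u := u) (v := v) (x := x) (y := y) (n := n) Q.e00 with ⟨t, h1, h2⟩ | A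
    · have Q' := Q.tr H.toPF t
      rw [← h1, ← h2] at Q'
      obtain ⟨k1, k2, k3⟩ := hR (Or.inl Q')
      rw [k1, k2, k3] at Q'
      exact ⟨t, Or.inr (Or.inr (Or.inr (Or.inr (Or.inl ⟨Q', by omega, by omega⟩))))⟩
    rcases toAd (u := u) (v := v) (x := x) (y := y) (n := n) Q.e11 with ⟨t, h1, h2⟩ | B
    · have Q' := Q.tr H.toPF t
      rw [← h1, ← h2] at Q'
      obtain ⟨k1, k2, k3⟩ := hR (Or.inr (Or.inl Q'))
      rw [k1, k2, k3] at Q'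
      exact ⟨t, Or.inr (Or.inr (Or.inr (Or.inr (Or.inr ⟨Q', by omega, by omega⟩))))⟩
    exact (HH.F A B Ad.self (by omega)).elim

theorem candX (H : Tri n E)
    (hS : ∀ {t1' t3' t4'}, SD E u v t1' t3' t4' → t1' = t1 ∧ t3' = t3 ∧ t4' = t4)
    (hR : ∀ {r1' r3' r4'}, RD E u v r1' r3' r4' → r1' = r1 ∧ r3' = r3 ∧ r4' = r4)
    (hne : ¬ E x y) (hl : x + 2 < y) (HH : PF n (Ad n (Rm n E u v) x y)) :
    ∃ t, XC E u v r1 r3 r4 t1 t3 t4 (x + t * n) (y + t * n) := by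
  obtain ⟨a0, a1, b0, b1, b2, Q, h⟩ := H.S2 hne hl (HH.len Ad.self)
  have ho := Q.o
  rcases h with ⟨rfl, h⟩ | ⟨rfl, h, h'⟩ | ⟨rfl, h, h'⟩
  · rcases toAd (u := u) (v := v) (x := x) (y := y) (n := n) Q.e01 with ⟨t, h1, h2⟩ | A
    · have Q' := Q.tr H.toPF t
      rw [← h1, ← h2] at Q'
      obtain ⟨k1, k2, k3⟩ := hS (Or.inl Q')
      rw [k1, k2, k3] at Q'
      exact ⟨t, Or.inl ⟨Q', by omega, by omega⟩⟩
    rcases toAd (u := u) (v := v) (x := x) (y := y) (n := n) Q.e12 with ⟨t, h1, h2⟩ | B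
    · have Q' := Q.tr H.toPF t
      rw [← h1, ← h2] at Q'
      obtain ⟨k1, k2, k3⟩ := hS (Or.inr Q')
      rw [k1, k2, k3] at Q'
      exact ⟨t, Or.inr (Or.inl ⟨Q', by omega, by omega⟩)⟩
    exact (HH.F A B Ad.self (by omega)).elim
  · rcases toAd (u := u) (v := v) (x := x) (y := y) (n := n) Q.e01 with ⟨t, h1, h2⟩ | A
    · have Q' := Q.tr H.toPF t
      rw [← h1, ← h2] at Q'
      obtain ⟨k1, k2, k3⟩ := hS (Or.inl Q')
      rw [k1, k2, k3] at Q'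
      exact ⟨t, Or.inr (Or.inr (Or.inl ⟨Q', by omega, by omega⟩))⟩
    rcases toAd (u := u) (v := v) (x := x) (y := y) (n := n) Q.e02 with ⟨t, h1, h2⟩ | B
    · have Q' := Q.tr H.toPF t
      rw [← h1, ← h2] at Q'
      obtain ⟨k1, k2, k3⟩ := hR (Or.inr (Or.inr Q'))
      rw [k1, k2, k3] at Q'
      exact ⟨t, Or.inr (Or.inr (Or.inr (Or.inl ⟨Q', by omega, by omega⟩)))⟩
    exact (HH.F A Ad.self B (by omega)).elim
  · rcases toAd (u := u) (v := v) (x := x) (y := y) (n := n) Q.e11 with ⟨t, h1, h2⟩ | A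
    · have Q' := Q.tr H.toPF t
      rw [← h1, ← h2] at Q'
      obtain ⟨k1, k2, k3⟩ := hR (Or.inr (Or.inl Q'))
      rw [k1, k2, k3] at Q'
      exact ⟨t, Or.inr (Or.inr (Or.inr (Or.inr (Or.inl ⟨Q', by omega, by omega⟩))))⟩
    rcases toAd (u := u) (v := v) (x := x) (y := y) (n := n) Q.e02 with ⟨t, h1, h2⟩ | B
    · have Q' := Q.tr H.toPF t
      rw [← h1, ← h2] at Q'
      obtain ⟨k1, k2, k3⟩ := hR (Or.inr (Or.inr Q'))
      rw [k1, k2, k3] at Q'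
      exact ⟨t, Or.inr (Or.inr (Or.inr (Or.inr (Or.inr ⟨Q', by omega, by omega⟩))))⟩
    exact (HH.F Ad.self A B (by omega)).elim

theorem jcases {j : ℤ} (hn : 2 ≤ n) (h1 : -(2 * n) < j * n) (h2 : j * n < 2 * n) :
    j = -1 ∨ j = 0 ∨ j = 1 := by
  have h3 : -2 < j := by
    by_contra h
    have : j * n ≤ -2 * n := by nlinarith
    omega
  have h4 : j < 2 := by
    by_contra h
    have : 2 * n ≤ j * n := by nlinarith
    omega
  omega

theorem jcases2 {j : ℤ} (hn : 2 ≤ n) (h1 : 0 < j * n) (h2 : j * n ≤ 2 * n) :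
    j = 1 ∨ j = 2 := by
  have h3 : 0 < j := by
    by_contra h
    have : j * n ≤ 0 := by nlinarith
    omega
  have h4 : j < 3 := by
    by_contra h
    have : 3 * n ≤ j * n := by nlinarith
    omega
  omega

/-- description of the flip in the case `S1`. -/
def Des (n : ℤ) (E : ℤ → ℤ → Prop) (u v r1 r3 r4 t1 t3 t4 x y : ℤ) : Prop :=
  (v = u + 2 * n ∧ x = t4 ∧ y = t4 + 2 * n) ∨
  (RD E u v r1 r3 r4 ∧ v < r3 ∧ t3 < r1 ∧ r3 < t1 ∧ x = t3 ∧ y = r3) ∨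
  (RD E u v r1 r3 r4 ∧ v < r4 ∧ r1 < t4 ∧ t1 < r4 ∧ x = t4 ∧ y = r4) ∨
  (RD E u v r1 r3 r4 ∧ r4 < u ∧ r1 < t4 ∧ x = r4 ∧ y = t4)

theorem Des.uniq (H : PF n E) (e : E u v) (SS : Star E u t3 t4 v t1) {x' y' : ℤ}
    (h : Des n E u v r1 r3 r4 t1 t3 t4 x y) (h' : Des n E u v r1 r3 r4 t1 t3 t4 x' y') :
    x' = x ∧ y' = y := by
  have ho := SS.o
  have excl : RD E u v r1 r3 r4 → v < r3 → t3 < r1 → r3 < t1 → r1 < t4 →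
      ((v < r4 ∧ t1 < r4) ∨ r4 < u) → False := by
    intro h h1 h2 h3 h4 h5
    rcases h with S | S | S <;> have := S.o
    · exact H.F e SS.e12 S.e12 (by omega)
    · exact H.F S.e00 e SS.e12 (by omega)
    · omega
  rcases h with h | ⟨R, h⟩ | ⟨R, h⟩ | ⟨R, h⟩ <;> rcases h' with h' | ⟨R', h'⟩ | ⟨R', h'⟩ | ⟨R', h'⟩
  all_goals first
    | omega
    | exact (R.nonloop H (by omega)).elim
    | exact (R'.nonloop H (by omega)).elim
    | exact (excl R (by omega) (by omega) (by omega) (by omega) (by omega)).elim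

/-- the case `(t4, t4+n)` -/
theorem noMid (H : Tri n E) (SS : Star E u t3 t4 v t1) (HH : Tri n (Ad n (Rm n E u v) x y))
    (hx : Ad n (Rm n E u v) x y t4 (t4 + n)) (hxy : y = x + n) (h1 : t1 < t4 + n)
    (h2 : t4 - n < u) : False := by
  have hn := H.npos
  have ho := SS.o
  have c1 : ∀ z, t4 + n < z → ¬ Ad n (Rm n E u v) x y t4 z := by
    rintro z hz (h | ⟨t, k1, k2⟩)
    · exact SS.cB0 H.toPF (by omega) h.1
    · omega
  obtain ⟨a0, a1, b0, b1, b2, Q, h⟩ := HH.S4 hx (by omega) (by omega)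
  have := Q.o
  rcases h with ⟨rfl, rfl⟩ | ⟨rfl, rfl⟩ | ⟨rfl, rfl⟩
  · exact c1 b1 (by omega) Q.e01
  · exact c1 b2 (by omega) Q.e12
  · rcases lt_trichotomy a0 (t4 - n) with h | h | h
    · rcases Q.e00 with h' | ⟨t, k1, k2⟩
      · exact SS.rB0 H.toPF (by omega) h'.1
      · omega
    · have := HH.up Q.e01
      rw [h, sub_add_cancel] at this
      exact c1 _ (by omega) this
    · exact HH.F (HH.dn hx) Q.e01 Q.e12 (by omega)

theorem uniqS1 (H : Tri n E) (e : E u v) (SS : Star E u t3 t4 v t1)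
    (hR : ∀ {r1' r3' r4'}, RD E u v r1' r3' r4' → r1' = r1 ∧ r3' = r3 ∧ r4' = r4)
    (hne : ¬ E x y) (hl : x + 2 < y) (HH : Tri n (Ad n (Rm n E u v) x y)) :
    ∃ t, Des n E u v r1 r3 r4 t1 t3 t4 (x + t * n) (y + t * n) := by
  have hS : ∀ {t1' t3' t4'}, SD E u v t1' t3' t4' → t1' = t1 ∧ t3' = t3 ∧ t4' = t4 :=
    fun h => SD.uniq H.toPF (Or.inl SS) h
  have P := H.toPF
  have hn := H.npos
  have ho := SS.o
  have hlen := H.len e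
  obtain ⟨t, hY⟩ := candY H hS hR hne hl HH.toPF
  obtain ⟨s, hX⟩ := candX H hS hR hne hl HH.toPF
  have hxy := HH.len Ad.self
  obtain ⟨j, rfl⟩ : ∃ j, s = t + j := ⟨s - t, by ring⟩
  have hself := HH.tr (Ad.self (x := x) (y := y) (n := n) (E := Rm n E u v)) t
  rw [add_mul, ← add_assoc, ← add_assoc] at hX
  obtain ⟨x0, hx0⟩ : ∃ x0, x + t * n = x0 := ⟨_, rfl⟩
  obtain ⟨y0, hy0⟩ : ∃ y0, y + t * n = y0 := ⟨_, rfl⟩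
  have hne0 : ¬ E x0 y0 := by
    intro h
    apply hne
    have := H.tr h (-t)
    rw [← hx0, ← hy0] at this
    convert this using 1 <;> ring
  have hselfj : ∀ j : ℤ, Ad n (Rm n E u v) x y (x0 + j * n) (y0 + j * n) := by
    intro j
    rw [← hx0, ← hy0]
    exact HH.tr hself j
  rw [hx0, hy0] at hX hY hself
  have hRm : ∀ {p q : ℤ}, E p q → q - p ≠ v - u → Ad n (Rm n E u v) x y p q := by
    intro p q h h'
    refine Or.inl ⟨h, fun ⟨t, k1, k2⟩ => ?_⟩
    omega
  -- common contradictions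
  have I1 : ∀ {z}, E z t1 → u < z → z + n < v → False := fun h h1 h2 =>
    H.F (H.dn e) e h (by omega)
  have hgoal : ∀ k : ℤ, Des n E u v r1 r3 r4 t1 t3 t4 (x0 + k * n) (y0 + k * n) →
      ∃ t, Des n E u v r1 r3 r4 t1 t3 t4 (x + t * n) (y + t * n) := by
    intro k hk
    refine ⟨t + k, ?_⟩
    rw [← hx0, ← hy0] at hk
    convert hk using 1 <;> ring
  clear hS
  rcases hY with ⟨Q, h1, h2⟩ | ⟨Q, h1, h2⟩ | ⟨Q, h1, h2⟩ | ⟨Q, h1, h2, h3⟩ | ⟨Q, h1, h2, h3⟩ |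
    ⟨Q, h1, h2, h3⟩
  · -- Y1
    rcases hX with ⟨Q', k1, k2⟩ | ⟨Q', k1, k2⟩ | ⟨Q', k1, k2⟩ | ⟨Q', k1, k2, k3⟩ |
      ⟨Q', k1, k2, k3⟩ | ⟨Q', k1, k2, k3⟩
    · -- X1
      rcases jcases2 (j := j) hn (by omega) (by omega) with rfl | rfl
      · have := hselfj 1
        rw [k1, show y0 + 1 * n = t4 + n by omega] at this
        exact (noMid H SS HH this (by omega) (by omega) (by omega)).elim
      · by_cases hv : v = u + 2 * n
        · exact hgoal 2 (Or.inl ⟨hv, by omega, by omega⟩)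
        · exfalso
          obtain ⟨c, hc⟩ := H.loop
          have hcF := hRm hc (by omega)
          have hlo := hselfj 2
          rw [k1, show y0 + 2 * n = t4 + 2 * n by omega] at hlo
          -- move c into [t4, t4+n)
          have hpos : 0 < n := by omega
          have h5 := Int.emod_nonneg (c - t4) (show n ≠ 0 by omega)
          have h6 := Int.emod_add_mul_ediv (c - t4) n
          have h7 := Int.emod_lt_of_pos (c - t4) hpos
          have hc' := HH.tr hcF (-((c - t4) / n))
          have hcE := H.tr hc (-((c - t4) / n))
          have e1 : c + -((c - t4) / n) * n = t4 + (c - t4) % n := by linarith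
          have e2 : c + 2 * n + -((c - t4) / n) * n = t4 + (c - t4) % n + 2 * n := by linarith
          rw [e1, e2] at hc' hcE
          rcases eq_or_lt_of_le h5 with h8 | h8
          · rw [← h8] at hcE
            apply hne0
            have := H.dn (H.dn hcE)
            convert this using 1 <;> omega
          · exact HH.loop_unique hlo hc' (by omega) (by omega)
    · have := Q'.o; omega
    · -- X3
      obtain rfl : j = 1 := by
        rcases jcases (j := j) hn (by omega) (by omega) with rfl | rfl | rfl <;> omega
      by_cases h4 : u + n < t4
      · exact (H.F SS.e11 (H.up SS.e00) SS.e02 (by omega)).elim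
      · rcases toAd (u := u) (v := v) (x := x) (y := y) (n := n) SS.e02 with ⟨m, m1, m2⟩ | A
        · have hm : m = -1 := by
            rcases jcases (j := m) hn (by omega) (by omega) with rfl | rfl | rfl <;> omega
          subst hm
          have R := SS.sub P
          rw [show t4 - n = u by omega, show t1 - n = v by omega] at R
          obtain ⟨q1, q2, q3⟩ := hR (Or.inr (Or.inr R))
          rw [q1, q2, q3] at R
          exact hgoal 0 (Or.inr (Or.inr (Or.inr ⟨Or.inr (Or.inr R), by omega, by omega, by omega,
            by omega⟩)))
        · have a1 := hselfj 1
          have a2 := hselfj 2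
          have := H.len SS.e12
          exact (HH.F a1 A a2 (by omega)).elim
    · -- X4
      have := Q'.o
      rcases jcases (j := j) hn (by omega) (by omega) with rfl | rfl | rfl
      · exact (H.F Q'.e11 (H.dn e) e (by omega)).elim
      · exact hgoal 0 (Or.inr (Or.inr (Or.inr ⟨Or.inr (Or.inr Q'), by omega, by omega, by omega,
            by omega⟩)))
      · exact (I1 SS.e02 (by omega) (by omega)).elim
    · -- X5
      have := Q'.o
      rcases jcases (j := j) hn (by omega) (by omega) with rfl | rfl | rfl
      · exact (H.F Q'.e00 (H.dn e) e (by omega)).elim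
      · exact hgoal 0 (Or.inr (Or.inr (Or.inr ⟨Or.inr (Or.inl Q'), by omega, by omega, by omega,
            by omega⟩)))
      · exact (I1 SS.e02 (by omega) (by omega)).elim
    · -- X6
      exfalso
      have := Q'.o
      rcases jcases (j := j) hn (by omega) (by omega) with rfl | rfl | rfl
      · by_cases h5 : r1 < v - n
        · exact H.F Q'.e01 (H.dn e) e (by omega)
        · have := H.len Q'.e12
          exact H.F Q'.e00 (H.dn e) Q'.e12 (by omega)
      · exact H.F Q'.e01 e SS.e02 (by omega)
      · exact I1 SS.e02 (by omega) (by omega)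
  · have := Q.o; omega
  · have := Q.o; omega
  · -- Y4
    have hq := Q.o
    have hl3 := H.len Q.e01
    rcases hX with ⟨Q', k1, k2⟩ | ⟨Q', k1, k2⟩ | ⟨Q', k1, k2⟩ | ⟨Q', k1, k2, k3⟩ |
      ⟨Q', k1, k2, k3⟩ | ⟨Q', k1, k2, k3⟩
    · exfalso
      rcases jcases (j := j) hn (by omega) (by omega) with rfl | rfl | rfl
      · exact H.F e (H.up e) Q.e11 (by omega)
      · exact H.F e SS.e02 Q.e11 (by omega)
      · have a1 := hselfj 0
        have a2 := hselfj 1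
        have a3 := hRm (H.up SS.e00) (by omega)
        exact HH.F a1 a3 a2 (by omega)
    · have := Q'.o; omega
    · rcases jcases (j := j) hn (by omega) (by omega) with rfl | rfl | rfl
      · exact (H.F e (H.up e) Q.e11 (by omega)).elim
      · exact hgoal 0 (Or.inr (Or.inl ⟨Or.inl Q, by omega, by omega, by omega, by omega,
            by omega⟩))
      · exact (H.F e (H.up e) SS.e12 (by omega)).elim
    · have := Q'.o; omega
    · have := Q'.o; omega
    · have := Q'.o; omega
  · -- Y5
    have hq := Q.o
    rcases hX with ⟨Q', k1, k2⟩ | ⟨Q', k1, k2⟩ | ⟨Q', k1, k2⟩ | ⟨Q', k1, k2, k3⟩ |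
      ⟨Q', k1, k2, k3⟩ | ⟨Q', k1, k2, k3⟩
    · rcases jcases (j := j) hn (by omega) (by omega) with rfl | rfl | rfl
      · exact (I1 SS.e02 (by omega) (by omega)).elim
      · exact hgoal 0 (Or.inr (Or.inr (Or.inl ⟨Or.inl Q, by omega, by omega, by omega, by omega,
            by omega⟩)))
      · exact (H.F (H.dn e) e Q.e12 (by omega)).elim
    · have := Q'.o; omega
    · exfalso
      rcases jcases (j := j) hn (by omega) (by omega) with rfl | rfl | rfl
      · exact (I1 SS.e12 (by omega) (by omega)).elim
      · exact H.F e Q.e12 SS.e12 (by omega)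
      · exact (H.F (H.dn e) e Q.e12 (by omega)).elim
    · have := Q'.o; omega
    · have := Q'.o; omega
    · have := Q'.o; omega
  · -- Y6
    have hq := Q.o
    have hl3 := H.len Q.e12
    rcases hX with ⟨Q', k1, k2⟩ | ⟨Q', k1, k2⟩ | ⟨Q', k1, k2⟩ | ⟨Q', k1, k2, k3⟩ |
      ⟨Q', k1, k2, k3⟩ | ⟨Q', k1, k2, k3⟩
    · exfalso
      rcases jcases (j := j) hn (by omega) (by omega) with rfl | rfl | rfl
      · exact H.F e (H.up e) Q.e02 (by omega)
      · exact H.F e SS.e02 Q.e02 (by omega)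
      · have a1 := hselfj 0
        have a2 := hselfj 1
        have a3 := hRm (H.up SS.e00) (by omega)
        exact HH.F a1 a3 a2 (by omega)
    · have := Q'.o; omega
    · rcases jcases (j := j) hn (by omega) (by omega) with rfl | rfl | rfl
      · exact (H.F e (H.up e) Q.e02 (by omega)).elim
      · exact hgoal 0 (Or.inr (Or.inl ⟨Or.inr (Or.inl Q), by omega, by omega, by omega, by omega,
            by omega⟩))
      · exact (H.F e (H.up e) SS.e12 (by omega)).elim
    · have := Q'.o; omega
    · exfalso
      rcases jcases (j := j) hn (by omega) (by omega) with rfl | rfl | rfl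
      · exact H.F Q.e12 (H.up Q.e01) (H.up Q.e12) (by omega)
      · omega
      · omega
    · have := Q'.o; omega

end
end PD

section PE
variable {n : ℤ} {E : ℤ → ℤ → Prop} {u v x y x' y' : ℤ}

theorem neg_ex {a b c d : ℤ} : (∃ t : ℤ, a = -b + t * n ∧ c = -d + t * n) ↔
    ∃ t : ℤ, -c = d + t * n ∧ -a = b + t * n := by
  constructor <;> rintro ⟨t, h1, h2⟩ <;> exact ⟨-t, by rw [neg_mul]; omega, by rw [neg_mul]; omega⟩

theorem Rf_AdRm : Rf (Ad n (Rm n E u v) x y) = Ad n (Rm n (Rf E) (-v) (-u)) (-y) (-x) := by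
  funext p q
  apply propext
  unfold Rf Ad Rm
  refine or_congr (and_congr Iff.rfl (not_congr neg_ex)) ?_
  constructor <;> rintro ⟨t, h1, h2⟩ <;> exact ⟨-t, by rw [neg_mul]; omega, by rw [neg_mul]; omega⟩

theorem uniq_aux {t1 t3 t4 : ℤ} (H : Tri n E) (e : E u v) (hv : u + 2 < v)
    (SS : Star E u t3 t4 v t1)
    (hne : ¬ E x y) (hl : x + 2 < y) (HH : Tri n (Ad n (Rm n E u v) x y))
    (hne' : ¬ E x' y') (hl' : x' + 2 < y') (HH' : Tri n (Ad n (Rm n E u v) x' y')) :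
    ∃ t, x' = x + t * n ∧ y' = y + t * n := by
  obtain ⟨r1, r3, r4, hR⟩ : ∃ r1 r3 r4, ∀ {r1' r3' r4'}, RD E u v r1' r3' r4' →
      r1' = r1 ∧ r3' = r3 ∧ r4' = r4 := by
    by_cases hv2 : v = u + 2 * n
    · exact ⟨0, 0, 0, fun h => (h.nonloop H.toPF hv2).elim⟩
    · obtain ⟨a0, a1, b0, b1, b2, Q, h⟩ := H.S4 e (by omega) hv2
      rcases h with ⟨rfl, rfl⟩ | ⟨rfl, rfl⟩ | ⟨rfl, rfl⟩
      · exact ⟨_, _, _, fun h => RD.uniq H.toPF (Or.inl Q) h⟩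
      · exact ⟨_, _, _, fun h => RD.uniq H.toPF (Or.inr (Or.inl Q)) h⟩
      · exact ⟨_, _, _, fun h => RD.uniq H.toPF (Or.inr (Or.inr Q)) h⟩
  obtain ⟨t, D⟩ := uniqS1 H e SS hR hne hl HH
  obtain ⟨s, D'⟩ := uniqS1 H e SS hR hne' hl' HH'
  obtain ⟨h1, h2⟩ := Des.uniq H.toPF e SS D D'
  exact ⟨t - s, by rw [sub_mul]; omega, by rw [sub_mul]; omega⟩

theorem uniq (H : Tri n E) (e : E u v) (hv : u + 2 < v)
    (hne : ¬ E x y) (hl : x + 2 < y) (HH : Tri n (Ad n (Rm n E u v) x y))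
    (hne' : ¬ E x' y') (hl' : x' + 2 < y') (HH' : Tri n (Ad n (Rm n E u v) x' y')) :
    ∃ t, x' = x + t * n ∧ y' = y + t * n := by
  obtain ⟨a0, a1, b0, b1, b2, Q, h⟩ := H.S3 e hv
  rcases h with ⟨rfl, rfl⟩ | ⟨rfl, rfl⟩
  · exact uniq_aux H e hv Q hne hl HH hne' hl' HH'
  · have K := HH.refl
    have K' := HH'.refl
    rw [Rf_AdRm] at K K'
    obtain ⟨t, h1, h2⟩ := uniq_aux H.refl (Rf.intro e) (by omega) Q.refl
      (x := -y) (y := -x) (x' := -y') (y' := -x') (by unfold Rf; simpa using hne) (by omega) K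
      (by unfold Rf; simpa using hne') (by omega) K'
    exact ⟨-t, by rw [neg_mul]; omega, by rw [neg_mul]; omega⟩
end PE

section PG
variable {n : ℤ} {E : ℤ → ℤ → Prop} {u v x y x' y' r1 r3 r4 t1 t3 t4 : ℤ}

theorem PF.X3 (H : PF n E) {x1 y1 x2 y2 x3 y3 : ℤ} (e1 : E x1 y1) (e2 : E x2 y2) (e3 : E x3 y3)
    (h12 : X x1 y1 x2 y2) (h13 : X x1 y1 x3 y3) (h23 : X x2 y2 x3 y3) : False := by
  unfold X at *
  rcases h12 with h | h <;> rcases h13 with h' | h' <;> rcases h23 with h'' | h''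
  · exact H.F e1 e2 e3 (by omega)
  · exact H.F e1 e3 e2 (by omega)
  · omega
  · exact H.F e3 e1 e2 (by omega)
  · exact H.F e2 e1 e3 (by omega)
  · omega
  · exact H.F e2 e3 e1 (by omega)
  · exact H.F e3 e2 e1 (by omega)

theorem Blk1.toX (h : Blk1 E x y) : ∃ p q r s, E p q ∧ E r s ∧ X p q r s ∧ X x y p q ∧ X x y r s := by
  obtain ⟨p, q, r, s, e1, e2, h⟩ := h
  refine ⟨p, q, r, s, e1, e2, ?_⟩
  unfold X
  omega

theorem Rm.ne {p q : ℤ} (h : Rm n E u v p q) : ¬ (p = u ∧ q = v) := fun h' =>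
  h.2 ⟨0, by omega, by omega⟩

theorem Rm.ne' {p q : ℤ} (h : Rm n E u v p q) : ¬ (p = u + n ∧ q = v + n) := fun h' =>
  h.2 ⟨-1, by omega, by omega⟩

theorem exA12 (H : PF n E) (e : E u v)
    (R : Star E u r1 v r3 r4 ∨ Star E r4 u r1 v r3)
    (S : (Star E u t3 t4 v t1 ∧ r3 < t1) ∨ Star E t1 u t3 t4 v) :
    ∃ x y, ¬ E x y ∧ x < y ∧ y ≤ x + 2 * n ∧ PF n (Ad n (Rm n E u v) x y) := by
  have hn := H.npos
  obtain ⟨hr, eur, ra⟩ : v < r3 ∧ E u r3 ∧ (∀ z, v < z → z < r3 → ¬ E u z) := by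
    rcases R with R | R
    · exact ⟨R.o.2.2.1, R.e01, fun z h1 h2 => R.cA0 H h1 h2⟩
    · exact ⟨R.o.2.2.2, R.e12, fun z h1 h2 => R.cA1 H h1 h2⟩
  obtain ⟨ho, eut, etv, sa⟩ : (u < t3 ∧ t3 < t4 ∧ t4 < v) ∧ E u t4 ∧ E t3 v ∧
      (∀ z, t4 < z → z < v → ¬ E u z) := by
    rcases S with ⟨S, -⟩ | S
    · exact ⟨by have := S.o; omega, S.e00, S.e11, fun z h1 h2 => S.cA0 H h1 h2⟩
    · exact ⟨by have := S.o; omega, S.e11, S.e02, fun z h1 h2 => S.cA1 H h1 h2⟩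
  have hg : ¬ E t3 r3 := by
    rcases S with ⟨S, h⟩ | S
    · exact S.cA1 H hr h
    · exact S.cB0 H hr
  have hl := H.len eur
  refine ⟨t3, r3, hg, by omega, by omega, PF.ext (H.rm u v) (by omega) (by omega) ?_⟩
  rintro (hb | ⟨⟨p, q, d, h1, h2, h3, h4, h5, h6⟩, -⟩)
  · have cls : ∀ {p q}, Rm n E u v p q → X t3 r3 p q → (u ≤ p ∧ p < t3 ∧ t3 < q ∧ q ≤ t4) ∨
        ((v ≤ p ∧ p < r3 ∧ r3 < q) ∨ (p < u ∧ v ≤ q ∧ q < r3)) ∨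
        ((t3 < p ∧ p < v ∧ r3 < q) ∨ (p < u ∧ t3 < q ∧ q < v)) := by
      intro p q d hx
      rcases hx with hx | hx
      · omega
      · have hne := d.ne
        rcases lt_trichotomy p u with h | rfl | h
        · omega
        · by_cases h1 : q ≤ t4
          · omega
          by_cases h2 : q < v
          · exact (sa _ (by omega) h2 d.1).elim
          · exact (ra _ (by omega) (by omega) d.1).elim
        · by_cases h1 : q ≤ t4
          · omega
          exfalso
          rcases S with ⟨S, hs⟩ | S <;> have := S.o
          · by_cases h2 : q < v
            · exact H.F d.1 etv S.e02 (by omega)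
            · exact H.F eut d.1 S.e12 (by omega)
          · exact H.F S.e00 eut d.1 (by omega)
    obtain ⟨p, q, r, s, d1, d2, hx, hx1, hx2⟩ := hb.toX
    have c1 := cls d1 hx1
    have c2 := cls d2 hx2
    by_cases hI1 : u ≤ p ∧ p < t3 ∧ t3 < q ∧ q ≤ t4 <;>
      by_cases hI2 : u ≤ r ∧ r < t3 ∧ t3 < s ∧ s ≤ t4
    · exact H.X3 d1.1 d2.1 etv hx (by unfold X; omega) (by unfold X; omega)
    · by_cases hO2 : ((v ≤ r ∧ r < r3 ∧ r3 < s) ∨ (r < u ∧ v ≤ s ∧ s < r3))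
      · unfold X at hx; omega
      · exact H.X3 d1.1 d2.1 etv hx (by unfold X; omega) (by unfold X; omega)
    · by_cases hO2 : ((v ≤ p ∧ p < r3 ∧ r3 < q) ∨ (p < u ∧ v ≤ q ∧ q < r3))
      · unfold X at hx; omega
      · exact H.X3 d1.1 d2.1 etv hx (by unfold X; omega) (by unfold X; omega)
    · exact H.X3 d1.1 d2.1 eur hx (by unfold X; omega) (by unfold X; omega)
  · have hne := d.ne'
    by_cases k1 : p < u + n
    · exact H.F eur d.1 (H.up eur) (by omega)
    by_cases k2 : q - n < v
    · exact H.F eur d.1 (H.up etv) (by omega)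
    rcases S with ⟨S, hs⟩ | S <;> have := S.o
    · by_cases k3 : q ≤ t1
      · exact H.F eur d.1 (H.up S.e12) (by omega)
      · exact H.F eur S.e12 d.1 (by omega)
    · by_cases k3 : u < p - n
      · exact H.F S.e00 eut (H.dn d.1) (by omega)
      · obtain rfl : p = u + n := by omega
        have := H.dn d.1
        rw [add_sub_cancel_right] at this
        exact ra _ (by omega) (by omega) this

theorem exA3 (H : PF n E) (e : E u v) (R : Star E r3 r4 u r1 v) (S : Star E t1 u t3 t4 v)
    (h1 : t3 < r1) (h2 : r3 < t1) :
    ∃ x y, ¬ E x y ∧ x < y ∧ y ≤ x + 2 * n ∧ PF n (Ad n (Rm n E u v) x y) := by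
  have hn := H.npos
  have hr := R.o
  have hs := S.o
  have hl := H.len R.e01
  refine ⟨r3, t3, R.cA0 H (by omega) (by omega), by omega, by omega,
    PF.ext (H.rm u v) (by omega) (by omega) ?_⟩
  rintro (hb | ⟨⟨p, q, d, h1, h2, h3, h4, h5, h6⟩, -⟩)
  · have cls : ∀ {p q}, Rm n E u v p q → X r3 t3 p q → (u ≤ p ∧ p < t3 ∧ t3 < q ∧ q ≤ t4) ∨
        ((p < r3 ∧ r3 < q ∧ q < u) ∨ (r3 < p ∧ p < u ∧ v ≤ q)) ∨
        (r3 < p ∧ p < u ∧ t3 < q ∧ q < v) := by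
      intro p q d hx
      have hne := d.ne
      rcases hx with hx | hx
      · rcases lt_trichotomy p u with h | rfl | h
        · omega
        · by_cases h1 : q ≤ t4
          · omega
          by_cases h2 : q < v
          · exact (S.cA1 H (by omega) h2 d.1).elim
          · exact (R.cB0 H (by omega) d.1).elim
        · by_cases h1 : q ≤ t4
          · omega
          · exact (H.F S.e00 S.e11 d.1 (by omega)).elim
      · rcases lt_trichotomy q u with h | rfl | h
        · omega
        · exact (R.rB0 H (by omega) d.1).elim
        · exact (H.F d.1 S.e00 S.e11 (by omega)).elim
    obtain ⟨p, q, r, s, d1, d2, hx, hx1, hx2⟩ := hb.toX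
    have c1 := cls d1 hx1
    have c2 := cls d2 hx2
    by_cases hI1 : u ≤ p ∧ p < t3 ∧ t3 < q ∧ q ≤ t4 <;>
      by_cases hI2 : u ≤ r ∧ r < t3 ∧ t3 < s ∧ s ≤ t4
    · exact H.X3 d1.1 d2.1 S.e02 hx (by unfold X; omega) (by unfold X; omega)
    · by_cases hO2 : ((r < r3 ∧ r3 < s ∧ s < u) ∨ (r3 < r ∧ r < u ∧ v ≤ s))
      · unfold X at hx; omega
      · exact H.X3 d1.1 d2.1 S.e02 hx (by unfold X; omega) (by unfold X; omega)
    · by_cases hO2 : ((p < r3 ∧ r3 < q ∧ q < u) ∨ (r3 < p ∧ p < u ∧ v ≤ q))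
      · unfold X at hx; omega
      · exact H.X3 d1.1 d2.1 S.e02 hx (by unfold X; omega) (by unfold X; omega)
    · by_cases hC : (r3 < p ∧ p < u ∧ t3 < q ∧ q < v) ∧ (r3 < r ∧ r < u ∧ t3 < s ∧ s < v)
      · exact H.X3 d1.1 d2.1 e hx (by unfold X; omega) (by unfold X; omega)
      · exact H.X3 d1.1 d2.1 R.e00 hx (by unfold X; omega) (by unfold X; omega)
  · by_cases k1 : r1 < q
    · exact H.F R.e01 d.1 (H.up R.e01) (by omega)
    by_cases k2 : t1 < p
    · exact H.F S.e00 d.1 (H.up R.e01) (by omega)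
    by_cases k3 : p < r4
    · exact H.F R.e00 d.1 R.e12 (by omega)
    by_cases k4 : r3 + n < u
    · exact H.F R.e00 d.1 (H.up R.e01) (by omega)
    by_cases k5 : v ≤ u + n
    · exact H.F R.e01 R.e12 (H.up R.e01) (by omega)
    · exact H.F d.1 (H.up R.e00) S.e02 (by omega)

theorem exLoop (H : PF n E) (e : E u v) (hv : v = u + 2 * n) (S : Star E u t3 t4 v t1) :
    ∃ x y, ¬ E x y ∧ x < y ∧ y ≤ x + 2 * n ∧ PF n (Ad n (Rm n E u v) x y) := by
  have hn := H.npos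
  have hs := S.o
  subst hv
  have h3 : u + n ≤ t3 := by
    by_contra h
    have := H.len S.e12
    exact H.F e S.e12 (H.up e) (by omega)
  have eup : E (u + n) (u + n + 2 * n) := by
    have := H.up e
    convert this using 1; ring
  refine ⟨t4, t4 + 2 * n, fun h => H.loop_unique eup h (by omega) (by omega), by omega, by omega,
    PF.ext (H.rm _ _) (by omega) (by omega) ?_⟩
  rintro (hb | ⟨-, h⟩)
  swap
  · exact h rfl
  have cls : ∀ {p q}, Rm n E u (u + 2 * n) p q → p < t4 → t4 < q → u < p := by
    intro p q d h1 h2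
    have hl := H.len d.1
    have hne := d.ne
    rcases lt_trichotomy p u with h | rfl | h
    · by_cases h4 : u - n < p
      · exact (H.F (H.dn e) d.1 e (by omega)).elim
      · omega
    · exact (S.cA0 H (by omega) (by omega) d.1).elim
    · exact h
  have two : ∀ {p q r s}, Rm n E u (u + 2 * n) p q → Rm n E u (u + 2 * n) r s → p < r → r < t4 →
      t4 < q → q < s → False := by
    intro p q r s d1 d2 h1 h2 h4 h5
    have := cls d1 (by omega) h4
    exact H.F S.e00 d1.1 d2.1 (by omega)
  have sh : ∀ {p q}, Rm n E u (u + 2 * n) p q → Rm n E u (u + 2 * n) (p - 2 * n) (q - 2 * n) := by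
    intro p q d
    have := (H.rm _ _).dn ((H.rm _ _).dn d)
    convert this using 1 <;> ring
  obtain ⟨p, q, r, s, d1, d2, k1, k2, k3, (k | k | k)⟩ := hb
  · exact two (sh d1) (sh d2) (by omega) (by omega) (by omega) (by omega)
  · have := H.len d1.1
    have := H.len d2.1
    exact two (sh d2) d1 (by omega) (by omega) (by omega) (by omega)
  · exact two d1 d2 (by omega) (by omega) (by omega) (by omega)

theorem ex_refl (h : ∃ x y, ¬ (Rf E) x y ∧ x < y ∧ y ≤ x + 2 * n ∧
      PF n (Ad n (Rm n (Rf E) (-v) (-u)) x y)) :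
    ∃ x y, ¬ E x y ∧ x < y ∧ y ≤ x + 2 * n ∧ PF n (Ad n (Rm n E u v) x y) := by
  obtain ⟨x, y, h1, h2, h3, h4⟩ := h
  have := h4.refl
  rw [Rf_AdRm, Rf_Rf, neg_neg, neg_neg] at this
  exact ⟨-y, -x, h1, by omega, by omega, this⟩

theorem exS1 (H : Tri n E) (e : E u v) (hv : u + 2 < v) (S : Star E u t3 t4 v t1) :
    ∃ x y, ¬ E x y ∧ x < y ∧ y ≤ x + 2 * n ∧ PF n (Ad n (Rm n E u v) x y) := by
  have P := H.toPF
  by_cases hv2 : v = u + 2 * n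
  · exact exLoop P e hv2 S
  have hs := S.o
  obtain ⟨a0, a1, b0, b1, b2, R, h⟩ := H.S4 e (by omega) hv2
  have hr := R.o
  rcases h with ⟨rfl, rfl⟩ | ⟨rfl, rfl⟩ | ⟨rfl, rfl⟩
  · by_cases h1 : t3 < a1
    · refine exA12 P e (Or.inl R) (Or.inl ⟨S, ?_⟩)
      by_contra h2
      rcases eq_or_lt_of_le (not_lt.1 h2) with h3 | h3
      · exact R.rB1 P S.o.1 h1 (h3 ▸ S.e12)
      · exact P.F e S.e12 R.e11 (by omega)
    · refine ex_refl (exA3 P.refl (Rf.intro e) R.refl S.refl (by omega) ?_)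
      by_contra h2
      rcases eq_or_lt_of_le (not_lt.1 h1) with h3 | h3
      · subst h3
        by_cases h4 : t1 = b2
        · subst h4
          exact S.cA1 P (by omega) (by omega) R.e11
        · exact S.cA1 P (by omega) (by omega) R.e11
      · exact P.F e R.e11 S.e12 (by omega)
  · exact ex_refl (exA12 P.refl (Rf.intro e) (Or.inr R.refl) (Or.inr S.refl))
  · exact ex_refl (exA12 P.refl (Rf.intro e) (Or.inl R.refl) (Or.inr S.refl))

theorem exist (H : Tri n E) (e : E u v) (hv : u + 2 < v) :
    ∃ x y, ¬ E x y ∧ x < y ∧ y ≤ x + 2 * n ∧ PF n (Ad n (Rm n E u v) x y) := by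
  obtain ⟨a0, a1, b0, b1, b2, Q, h⟩ := H.S3 e hv
  rcases h with ⟨rfl, rfl⟩ | ⟨rfl, rfl⟩
  · exact exS1 H e hv Q
  · exact ex_refl (exS1 H.refl (Rf.intro e) (by omega) Q.refl)
end PG

section PH

theorem exists_max {n : ℕ} (hn : 2 ≤ n) {A : Set Edge} (H : PF (n : ℤ) (rel A)) :
    ∃ T, A ⊆ T ∧ IsTriangulation n 2 T := by
  obtain ⟨m, hm, hmax⟩ := zorn_subset_nonempty {T : Set Edge | PF (n : ℤ) (rel T)} (by
    intro c hc hch hne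
    refine ⟨⋃₀ c, ?_, fun s hs => Set.subset_sUnion_of_mem hs⟩
    refine ⟨?_, ?_, ?_, ?_, H.npos⟩
    · rintro x y ⟨s, hs, h⟩
      exact (hc hs).lt h
    · rintro x y ⟨s, hs, h⟩
      exact ⟨s, hs, (hc hs).up h⟩
    · rintro x y ⟨s, hs, h⟩
      exact ⟨s, hs, (hc hs).dn h⟩
    · rintro x1 y1 x2 y2 x3 y3 ⟨s1, hs1, h1⟩ ⟨s2, hs2, h2⟩ ⟨s3, hs3, h3⟩ h
      obtain ⟨s, hs, k1, k2⟩ := hch.directedOn _ hs1 _ hs2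
      obtain ⟨s', hs', k3, k4⟩ := hch.directedOn _ hs _ hs3
      exact (hc hs').F (k3 (k1 h1)) (k3 (k2 h2)) (k4 h3) h) A H
  obtain ⟨h1, h2, h3⟩ := of_pf hmax.1
  refine ⟨m, hm, h1, h2, h3, fun T' k1 k2 k3 k4 => ?_⟩
  exact (hmax.2 (show T' ∈ {T : Set Edge | PF (n : ℤ) (rel T)} from pf_of hn k1 k2 k3) k4).antisymm k4

theorem rel_diff {n : ℕ} {T : Set Edge} {e : Edge} :
    rel (T \ orbitOf n e) = Rm n (rel T) e.1 e.2 := by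
  funext p q
  apply propext
  unfold rel Rm orbitOf shift
  refine and_congr Iff.rfl (not_congr ?_)
  simp only [Set.mem_setOf_eq, Prod.mk.injEq]
  constructor <;> rintro ⟨t, h1, h2⟩ <;> exact ⟨-t, by rw [neg_mul]; omega, by rw [neg_mul]; omega⟩

theorem orbit_sub {n : ℕ} {T : Set Edge} (H : PF (n : ℤ) (rel T)) {e : Edge} (he : e ∈ T) :
    orbitOf n e ⊆ T := by
  rintro f ⟨t, rfl⟩
  exact H.tr (x := e.1) (y := e.2) he t

theorem struct {n : ℕ} {T T' : Set Edge} (H : Tri (n : ℤ) (rel T)) (H' : Tri (n : ℤ) (rel T'))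
    {e : Edge} (he : e ∈ T) (hl : 2 < e.2 - e.1) (hsub : T \ orbitOf n e ⊆ T') (hne : T' ≠ T) :
    ∃ h : Edge, h ∉ T ∧ h.1 + 2 < h.2 ∧ T' = T \ orbitOf n e ∪ orbitOf n h := by
  have hn := H.npos
  have hN := part1 H
  have hN' := part1 H'
  have hshort : ∀ f ∈ T', f.2 - f.1 ≤ 2 → f ∈ T := by
    rintro ⟨x, y⟩ hf h
    have := H'.lt hf
    simp only at h
    rcases (show y = x + 1 ∨ y = x + 2 by omega) with rfl | rfl
    · exact H.s1 x
    · exact H.s2 x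
  have hsame : ∀ {f g : Edge}, orbitOf n f = orbitOf n g → f ∈ orbitOf n g := fun h => by
    rw [← h]; exact mem_orbit_self _
  have hsame' : ∀ {f g : Edge}, f ∈ orbitOf n g → orbitOf n f = orbitOf n g := fun h =>
    (orbit_eq_iff.2 h).symm
  set A := (orbitOf n) '' relevant n T with hA
  set A' := (orbitOf n) '' relevant n T' with hA'
  have hfin : A.Finite := Set.finite_of_ncard_ne_zero (by omega)
  have hfin' : A'.Finite := Set.finite_of_ncard_ne_zero (by omega)
  have heA : orbitOf n e ∈ A := ⟨e, ⟨he, hl, by have := H.len (x := e.1) (y := e.2) he; omega⟩, rfl⟩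
  have hs : A \ {orbitOf n e} ⊆ A' := by
    rintro _ ⟨⟨f, hf, rfl⟩, hfe⟩
    exact ⟨f, ⟨hsub ⟨hf.1, fun h => hfe (hsame' h)⟩, hf.2⟩, rfl⟩
  have hc1 := Set.ncard_diff_singleton_add_one heA hfin
  have hc2 := Set.ncard_diff_add_ncard_of_subset hs hfin'
  obtain ⟨o, ho⟩ := Set.ncard_eq_one.1 (show (A' \ (A \ {orbitOf n e})).ncard = 1 by omega)
  have hoo : o ∈ A' \ (A \ {orbitOf n e}) := by rw [ho]; rfl
  obtain ⟨⟨h, hh, rfl⟩, hno⟩ := hoo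
  have hT' : T' = T \ orbitOf n e ∪ orbitOf n h := by
    apply Set.Subset.antisymm
    · intro f hf
      by_cases hfl : f.2 - f.1 ≤ 2
      · refine Or.inl ⟨hshort f hf hfl, ?_⟩
        rintro ⟨t, rfl⟩
        simp only [shift] at hfl
        omega
      · by_cases hfo : orbitOf n f ∈ A \ {orbitOf n e}
        · obtain ⟨⟨g, hg, hgf⟩, hfe⟩ := hfo
          exact Or.inl ⟨orbit_sub H.toPF hg.1 (hsame hgf.symm), fun h => hfe (hsame' h)⟩
        · have : orbitOf n f ∈ A' \ (A \ {orbitOf n e}) :=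
            ⟨⟨f, ⟨hf, by omega, by have := H'.len (x := f.1) (y := f.2) hf; omega⟩, rfl⟩, hfo⟩
          rw [ho] at this
          exact Or.inr (hsame this)
    · exact Set.union_subset hsub (orbit_sub H'.toPF hh.1)
  refine ⟨h, fun hhT => hne ?_, by have := hh.2.1; omega, hT'⟩
  have h1 : orbitOf n h ∈ A := ⟨h, ⟨hhT, hh.2⟩, rfl⟩
  have h2 : orbitOf n h = orbitOf n e := by
    by_contra h3
    exact hno ⟨h1, h3⟩
  rw [hT', h2, Set.diff_union_of_subset (orbit_sub H.toPF he)]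

theorem part2 {n : ℕ} (hn : 2 ≤ n) {T : Set Edge} (hT : IsTriangulation n 2 T) {e : Edge}
    (he : e ∈ T) (hl : 2 < e.2 - e.1) :
    {T' : Set Edge | IsTriangulation n 2 T' ∧ T \ orbitOf n e ⊆ T'}.ncard = 2 := by
  have H := tri_of hn hT
  have he' : rel T e.1 e.2 := he
  obtain ⟨x, y, h1, h2, h3, h4⟩ := exist H he' (by omega)
  rw [← rel_diff, ← rel_union] at h4
  obtain ⟨T2, hT2, hT2t⟩ := exists_max hn h4
  have hsub2 : T \ orbitOf n e ⊆ T2 := Set.subset_union_left.trans hT2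
  have hne2 : T2 ≠ T := by
    rintro rfl
    exact h1 (hT2 (Or.inr (mem_orbit_self _)))
  rw [Set.ncard_eq_two]
  refine ⟨T, T2, hne2.symm, ?_⟩
  have H2 := tri_of hn hT2t
  obtain ⟨g, hg1, hg2, hg3⟩ := struct H H2 he hl hsub2 hne2
  ext T'
  simp only [Set.mem_setOf_eq, Set.mem_insert_iff, Set.mem_singleton_iff]
  constructor
  · rintro ⟨hT', hsub⟩
    by_cases hne : T' = T
    · exact Or.inl hne
    right
    have H' := tri_of hn hT'
    obtain ⟨k, hk1, hk2, hk3⟩ := struct H H' he hl hsub hne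
    have A2 := H2
    have A' := H'
    rw [hg3, show g = (g.1, g.2) from rfl, rel_union, rel_diff] at A2
    rw [hk3, show k = (k.1, k.2) from rfl, rel_union, rel_diff] at A'
    obtain ⟨t, m1, m2⟩ := uniq H he' (by omega) hg1 hg2 A2 hk1 hk2 A'
    have : orbitOf n g = orbitOf n k := orbit_eq_iff.2 ⟨t, Prod.ext m1 m2⟩
    rw [hk3, hg3, this]
  · rintro (rfl | rfl)
    · exact ⟨hT, Set.diff_subset⟩
    · exact ⟨hT2t, hsub2⟩
end PH

/-- Main theorem: `Δ_{C_n,2}` is pure of dimension `2(n−1)` and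
a weak pseudomanifold: for every `n`-periodic 2-triangulation `T` on `ℤ`:
(1) `T` contains exactly `2(n−1)` orbits of 2-relevant edges under translation
by `n`; and (2) for every 2-relevant edge `e ∈ T` with translation orbit `ẽ`,
there are exactly two `n`-periodic 2-triangulations on `ℤ` containing
`T ∖ ẽ` (one of which is `T` itself). -/
theorem main_theorem (n : ℕ) (hn : 1 ≤ n)
    (T : Set Edge) (hT : IsTriangulation n 2 T) :
    ((orbitOf n) '' {e ∈ T | 2 < e.2 - e.1 ∧ e.2 - e.1 ≤ 2 * (n : ℤ)}).ncard
        = 2 * (n - 1) ∧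
    ∀ e ∈ T, 2 < e.2 - e.1 → e.2 - e.1 ≤ 2 * (n : ℤ) →
      {T' : Set Edge | IsTriangulation n 2 T' ∧ T \ orbitOf n e ⊆ T'}.ncard = 2 := by
  rcases Nat.lt_or_ge n 2 with h | h
  · obtain rfl : n = 1 := by omega
    constructor
    · have : {e ∈ T | 2 < e.2 - e.1 ∧ e.2 - e.1 ≤ 2 * ((1 : ℕ) : ℤ)} = ∅ := by
        ext e
        simp only [Set.mem_sep_iff, Set.mem_empty_iff_false, iff_false]
        push_cast
        omega
      rw [this]
      simp
    · intro e _ h1 h2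
      push_cast at h2
      omega
  · exact ⟨part1 (tri_of h hT), fun e he hl _ => part2 h hT he hl⟩

end Multitriangulation
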